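/- arXiv:1606.08122 — 6 statements merged into one kernel-verified Lean document; each statement's English description precedes it below -/
import Mathlib

section
/- Let n ≥ 2 be an integer such that either n = ab + bc + ca + 1 for some integers a, b, c ≥ 1, or n is one of 7, 11, 19, 23, 31, 43, 59, 71, 79, 103, 131, 191, 211, 331, 463. Then there exists a spherical latin bitrade whose canonical group is isomorphic to Z_n ⊕ Z_n. -/
/-- A partial latin square on row set `R`, column set `C` and symbol set `S` (given as
pairwise disjoint types): a finite set of triples such that any two distinct triples agree
in at most one coordinate, and every row, column and symbol occurs in some triple. -/
def IsPartialLatinSquare {R C S : Type} (P : Finset (R × C × S)) : Prop :=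
  (∀ t₁ ∈ P, ∀ t₂ ∈ P, t₁ ≠ t₂ →
      ¬(t₁.1 = t₂.1 ∧ t₁.2.1 = t₂.2.1) ∧
      ¬(t₁.1 = t₂.1 ∧ t₁.2.2 = t₂.2.2) ∧
      ¬(t₁.2.1 = t₂.2.1 ∧ t₁.2.2 = t₂.2.2)) ∧
  (∀ r : R, ∃ t ∈ P, t.1 = r) ∧
  (∀ c : C, ∃ t ∈ P, t.2.1 = c) ∧
  (∀ s : S, ∃ t ∈ P, t.2.2 = s)

/-- The latin bitrade condition: for each triple `(r,c,s) ∈ W` there are unique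
`r' ≠ r`, `c' ≠ c`, `s' ≠ s` with `(r',c,s), (r,c',s), (r,c,s') ∈ B`. -/
def TradeCond {R C S : Type} (W B : Finset (R × C × S)) : Prop :=
  ∀ t ∈ W,
    (∃! r' : R, r' ≠ t.1 ∧ (r', t.2.1, t.2.2) ∈ B) ∧
    (∃! c' : C, c' ≠ t.2.1 ∧ (t.1, c', t.2.2) ∈ B) ∧
    (∃! s' : S, s' ≠ t.2.2 ∧ (t.1, t.2.1, s') ∈ B)

/-- A spherical latin bitrade: a connected latin bitrade `(W,B)` on finite row, column and
symbol sets `R`, `C`, `S` with `|R| + |C| + |S| = |W| + 2`.  (Connectedness says there is no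
latin bitrade `(W',B')` with `W' ⊊ W` and `B' ⊊ B`; for subsets of `W` and `B` the
"agree in at most one coordinate" condition is inherited, and the occurrence condition is
automatic on the sets of rows, columns and symbols actually occupied, so the substantive
conditions on a sub-bitrade are nonemptiness and the two trade conditions.) -/
structure SphericalLatinBitrade where
  R : Type
  C : Type
  S : Type
  instR : Fintype R
  instC : Fintype C
  instS : Fintype S
  W : Finset (R × C × S)
  B : Finset (R × C × S)
  W_nonempty : W.Nonempty
  B_nonempty : B.Nonempty
  W_pls : IsPartialLatinSquare W
  B_pls : IsPartialLatinSquare B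
  tradeWB : TradeCond W B
  tradeBW : TradeCond B W
  connected : ¬ ∃ (W' B' : Finset (R × C × S)), W' ⊂ W ∧ B' ⊂ B ∧
      W'.Nonempty ∧ B'.Nonempty ∧ TradeCond W' B' ∧ TradeCond B' W'
  spherical : @Fintype.card R instR + @Fintype.card C instC + @Fintype.card S instS
      = W.card + 2

/-- The subgroup of relations `r + c + s = 0`, for `(r,c,s) ∈ W`, in the free abelian group
on `R ⊔ C ⊔ S`. -/
def bitradeRelations (T : SphericalLatinBitrade) :
    AddSubgroup (FreeAbelianGroup (T.R ⊕ T.C ⊕ T.S)) :=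
  AddSubgroup.closure
    ((fun t : T.R × T.C × T.S =>
        FreeAbelianGroup.of (Sum.inl t.1) +
        FreeAbelianGroup.of (Sum.inr (Sum.inl t.2.1)) +
        FreeAbelianGroup.of (Sum.inr (Sum.inr t.2.2))) '' (T.W : Set (T.R × T.C × T.S)))

/-- The group `A_W`: the free abelian group on `R ⊔ C ⊔ S` modulo the relations
`r + c + s = 0` for `(r,c,s) ∈ W`. -/
abbrev groupAW (T : SphericalLatinBitrade) : Type :=
  FreeAbelianGroup (T.R ⊕ T.C ⊕ T.S) ⧸ bitradeRelations T

/-- The canonical group of a spherical latin bitrade: the torsion subgroup of `A_W`. -/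
abbrev CanonicalGroup (T : SphericalLatinBitrade) : Type :=
  AddCommGroup.torsion (groupAW T)

/-!
Let a connected graph be drawn on the sphere. The triples (start vertex, edge, left face) of its
oriented edges form a partial latin square, those with the end vertex instead a disjoint mate, and
Euler's formula makes this bitrade spherical. Eliminating the columns, `A_W` becomes the target of
the universal pair of conjugate harmonic functions on the vertices and the faces.

Take the complete graph on four vertices, subdivide three edges with a common end into paths of
`a₀, a₁, a₂` edges, and replace the edge opposite to the `i`-th path by `t * aᵢ` parallel ones. The
vertex function has a constant increment `f i` along each path, the face function a constant
increment `g i` across the opposite edges, and harmonicity says `g = curl a f` and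
`f = curl (t • a) g`. This means `f 0 + f 1 + f 2 = 0` and `n • f i = 0`, where
`n = t * (a₀ * a₁ + a₁ * a₂ + a₂ * a₀) + 1`, so the torsion of `A_W` is `ℤ/n ⊕ ℤ/n`. Every
`n ≥ 4` other than `5` is of this form.
-/

open Function

section Trades

variable {R C S : Type} {P W B W' B' : Finset (R × C × S)} {r r' : R} {c c' : C} {s s' : S}

theorem IsPartialLatinSquare.row_unique (hP : IsPartialLatinSquare P)
    (h : (r, c, s) ∈ P) (h' : (r', c, s) ∈ P) : r' = r := by
  by_contra hne
  exact (hP.1 _ h' _ h (by simp [hne])).2.2 ⟨rfl, rfl⟩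

theorem IsPartialLatinSquare.column_unique (hP : IsPartialLatinSquare P)
    (h : (r, c, s) ∈ P) (h' : (r, c', s) ∈ P) : c' = c := by
  by_contra hne
  exact (hP.1 _ h' _ h (by simp [hne])).2.1 ⟨rfl, rfl⟩

theorem IsPartialLatinSquare.symbol_unique (hP : IsPartialLatinSquare P)
    (h : (r, c, s) ∈ P) (h' : (r, c, s') ∈ P) : s' = s := by
  by_contra hne
  exact (hP.1 _ h' _ h (by simp [hne])).1 ⟨rfl, rfl⟩

theorem isPartialLatinSquare_map {D : Type} [Fintype D] (f : D ↪ R × C × S)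
    (row_column : Injective fun d ↦ ((f d).1, (f d).2.1))
    (row_symbol : Injective fun d ↦ ((f d).1, (f d).2.2))
    (column_symbol : Injective fun d ↦ ((f d).2.1, (f d).2.2))
    (row : Surjective fun d ↦ (f d).1) (column : Surjective fun d ↦ (f d).2.1)
    (symbol : Surjective fun d ↦ (f d).2.2) :
    IsPartialLatinSquare (Finset.univ.map f) := by
  simp only [IsPartialLatinSquare, Finset.mem_map, Finset.mem_univ, true_and,
    forall_exists_index, forall_apply_eq_imp_iff, exists_exists_eq_and]
  refine ⟨fun d d' hne ↦ ⟨?_, ?_, ?_⟩, row, column, symbol⟩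
  · exact fun h ↦ hne (congrArg f (row_column (Prod.ext h.1 h.2)))
  · exact fun h ↦ hne (congrArg f (row_symbol (Prod.ext h.1 h.2)))
  · exact fun h ↦ hne (congrArg f (column_symbol (Prod.ext h.1 h.2)))

theorem IsPartialLatinSquare.tradeCond (hB : IsPartialLatinSquare B)
    (h : ∀ t ∈ W, (∃ r ≠ t.1, (r, t.2.1, t.2.2) ∈ B) ∧ (∃ c ≠ t.2.1, (t.1, c, t.2.2) ∈ B) ∧
      ∃ s ≠ t.2.2, (t.1, t.2.1, s) ∈ B) :
    TradeCond W B := by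
  intro t ht
  obtain ⟨⟨r, hr⟩, ⟨c, hc⟩, s, hs⟩ := h t ht
  exact ⟨⟨r, hr, fun _ hr' ↦ hB.row_unique hr.2 hr'.2⟩,
    ⟨c, hc, fun _ hc' ↦ hB.column_unique hc.2 hc'.2⟩,
    ⟨s, hs, fun _ hs' ↦ hB.symbol_unique hs.2 hs'.2⟩⟩

theorem TradeCond.row_mem (h : TradeCond W' B') (hB : IsPartialLatinSquare B) (hsub : B' ⊆ B)
    (hW : (r, c, s) ∈ W') (hr : (r', c, s) ∈ B) : (r', c, s) ∈ B' := by
  obtain ⟨_, ⟨-, hmem⟩, -⟩ := (h _ hW).1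
  rwa [← hB.row_unique hr (hsub hmem)]

theorem TradeCond.column_mem (h : TradeCond W' B') (hB : IsPartialLatinSquare B) (hsub : B' ⊆ B)
    (hW : (r, c, s) ∈ W') (hc : (r, c', s) ∈ B) : (r, c', s) ∈ B' := by
  obtain ⟨_, ⟨-, hmem⟩, -⟩ := (h _ hW).2.1
  rwa [← hB.column_unique hc (hsub hmem)]

theorem TradeCond.symbol_mem (h : TradeCond W' B') (hB : IsPartialLatinSquare B) (hsub : B' ⊆ B)
    (hW : (r, c, s) ∈ W') (hs : (r, c, s') ∈ B) : (r, c, s') ∈ B' := by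
  obtain ⟨_, ⟨-, hmem⟩, -⟩ := (h _ hW).2.2
  rwa [← hB.symbol_unique hs (hsub hmem)]

end Trades

/-- The same edge traversed in the opposite direction; a dart, i.e. an oriented edge, is encoded
as an edge together with a bit. -/
def flipDart {E : Type} (d : E × Bool) : E × Bool := (d.1, !d.2)

@[simp]
theorem flipDart_fst {E : Type} (d : E × Bool) : (flipDart d).1 = d.1 := rfl

@[simp]
theorem flipDart_flipDart {E : Type} (d : E × Bool) : flipDart (flipDart d) = d := by
  simp [flipDart]

theorem flipDart_involutive {E : Type} : Involutive (flipDart : E × Bool → E × Bool) :=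
  flipDart_flipDart

theorem eq_or_eq_flipDart {E : Type} {d d' : E × Bool} (h : d.1 = d'.1) :
    d = d' ∨ d = flipDart d' := by
  obtain ⟨e, b⟩ := d
  obtain ⟨e', b'⟩ := d'
  obtain rfl : e = e' := h
  cases b <;> cases b' <;> simp [flipDart]

/-- The dart `d'` precedes `d` on the boundary of a face, where `vert` gives the start vertex and
`face` the left face of a dart. -/
def IsPrevDart {V E F : Type} (vert : E × Bool → V) (face : E × Bool → F) (d' d : E × Bool) :
    Prop :=
  vert (flipDart d') = vert d ∧ face d' = face d

/-- A connected graph on a closed oriented surface, without loops and bridges, in which a corner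
is determined by its vertex and its face. The dart `d` starts at `vert d`, ends at
`vert (flipDart d)`, and has `face d` on its left. The rotation at the vertices is not part of
the data: it is determined by `IsPrevDart`. In `connected`, `Q` is a set of edges, so that it does
not distinguish a dart from its opposite. -/
structure SurfaceGraph (V E F : Type) where
  vert : E × Bool → V
  face : E × Bool → F
  vert_flipDart_ne : ∀ d, vert (flipDart d) ≠ vert d
  face_flipDart_ne : ∀ d, face (flipDart d) ≠ face d
  exists_prev : ∀ d, ∃ d', IsPrevDart vert face d' d
  eq_of_corner_eq : ∀ ⦃d d'⦄, vert d = vert d' → face d = face d' → d = d'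
  vert_surjective : Surjective vert
  face_surjective : Surjective face
  nonempty_edge : Nonempty E
  connected : ∀ Q : Set E, Q.Nonempty →
    (∀ d d', IsPrevDart vert face d' d → d.1 ∈ Q → d'.1 ∈ Q) → Q = Set.univ

namespace SurfaceGraph

variable {V E F : Type} (G : SurfaceGraph V E F)

theorem eq_of_vert_eq_of_edge_eq {d d' : E × Bool} (hv : G.vert d = G.vert d') (he : d.1 = d'.1) :
    d = d' :=
  (eq_or_eq_flipDart he).resolve_right fun h ↦ G.vert_flipDart_ne d' (h ▸ hv)

theorem eq_of_face_eq_of_edge_eq {d d' : E × Bool} (hf : G.face d = G.face d') (he : d.1 = d'.1) :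
    d = d' :=
  (eq_or_eq_flipDart he).resolve_right fun h ↦ G.face_flipDart_ne d' (h ▸ hf)

/-- The dart before `d` on the boundary of `G.face d`. -/
noncomputable def prev (d : E × Bool) : E × Bool := (G.exists_prev d).choose

theorem vert_flipDart_prev (d : E × Bool) : G.vert (flipDart (G.prev d)) = G.vert d :=
  (G.exists_prev d).choose_spec.1

theorem face_prev (d : E × Bool) : G.face (G.prev d) = G.face d :=
  (G.exists_prev d).choose_spec.2

theorem prev_edge_ne (d : E × Bool) : (G.prev d).1 ≠ d.1 := by
  intro he
  have hloop : G.vert (flipDart (G.prev d)) = G.vert d := G.vert_flipDart_prev d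
  rw [G.eq_of_face_eq_of_edge_eq (G.face_prev d) he] at hloop
  exact G.vert_flipDart_ne d hloop

theorem prev_surjective [Finite E] : Surjective G.prev := by
  refine Finite.surjective_of_injective fun d d' h ↦ G.eq_of_corner_eq ?_ ?_
  · rw [← G.vert_flipDart_prev, h, G.vert_flipDart_prev]
  · rw [← G.face_prev, h, G.face_prev]

theorem eq_of_end_corner_eq [Finite E] {d d' : E × Bool}
    (hv : G.vert (flipDart d) = G.vert (flipDart d')) (hf : G.face d = G.face d') : d = d' := by
  obtain ⟨d, rfl⟩ := G.prev_surjective d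
  obtain ⟨d', rfl⟩ := G.prev_surjective d'
  rw [G.vert_flipDart_prev, G.vert_flipDart_prev] at hv
  rw [G.face_prev, G.face_prev] at hf
  rw [G.eq_of_corner_eq hv hf]

variable [Fintype E]

/-- The first mate of the bitrade of `G`: the triples (start vertex, edge, left face) of all
darts. -/
def white : Finset (V × E × F) :=
  Finset.univ.map ⟨fun d ↦ (G.vert d, d.1, G.face d), fun _ _ h ↦
    G.eq_of_corner_eq (congrArg Prod.fst h) (congrArg (·.2.2) h)⟩

/-- The second mate of the bitrade of `G`: the triples (end vertex, edge, left face) of all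
darts. -/
def black : Finset (V × E × F) :=
  Finset.univ.map ⟨fun d ↦ (G.vert (flipDart d), d.1, G.face d), fun _ _ h ↦
    G.eq_of_end_corner_eq (congrArg Prod.fst h) (congrArg (·.2.2) h)⟩

variable {G} in
theorem mem_white {t : V × E × F} : t ∈ G.white ↔ ∃ d, (G.vert d, d.1, G.face d) = t := by
  simp only [white, Finset.mem_map, Finset.mem_univ, true_and]
  rfl

variable {G} in
theorem mem_black {t : V × E × F} :
    t ∈ G.black ↔ ∃ d, (G.vert (flipDart d), d.1, G.face d) = t := by
  simp only [black, Finset.mem_map, Finset.mem_univ, true_and]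
  rfl

theorem mk_mem_white (d : E × Bool) : (G.vert d, d.1, G.face d) ∈ G.white :=
  mem_white.2 ⟨d, rfl⟩

theorem mk_mem_black (d : E × Bool) : (G.vert (flipDart d), d.1, G.face d) ∈ G.black :=
  mem_black.2 ⟨d, rfl⟩

theorem flipDart_mem_white (d : E × Bool) :
    (G.vert (flipDart d), d.1, G.face (flipDart d)) ∈ G.white :=
  G.mk_mem_white (flipDart d)

theorem flipDart_mem_black (d : E × Bool) : (G.vert d, d.1, G.face (flipDart d)) ∈ G.black := by
  simpa using G.mk_mem_black (flipDart d)

theorem prev_mem_black (d : E × Bool) : (G.vert d, (G.prev d).1, G.face d) ∈ G.black := by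
  simpa only [G.vert_flipDart_prev, G.face_prev] using G.mk_mem_black (G.prev d)

theorem card_white : G.white.card = 2 * Fintype.card E := by
  simp [white, mul_comm]

theorem isPartialLatinSquare_white : IsPartialLatinSquare G.white :=
  isPartialLatinSquare_map _
    (fun _ _ h ↦ G.eq_of_vert_eq_of_edge_eq (Prod.mk.inj h).1 (Prod.mk.inj h).2)
    (fun _ _ h ↦ G.eq_of_corner_eq (Prod.mk.inj h).1 (Prod.mk.inj h).2)
    (fun _ _ h ↦ G.eq_of_face_eq_of_edge_eq (Prod.mk.inj h).2 (Prod.mk.inj h).1)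
    G.vert_surjective Prod.fst_surjective G.face_surjective

theorem isPartialLatinSquare_black : IsPartialLatinSquare G.black :=
  isPartialLatinSquare_map _
    (fun _ _ h ↦ flipDart_involutive.injective
      (G.eq_of_vert_eq_of_edge_eq (Prod.mk.inj h).1 (Prod.mk.inj h).2))
    (fun _ _ h ↦ G.eq_of_end_corner_eq (Prod.mk.inj h).1 (Prod.mk.inj h).2)
    (fun _ _ h ↦ G.eq_of_face_eq_of_edge_eq (Prod.mk.inj h).2 (Prod.mk.inj h).1)
    (G.vert_surjective.comp flipDart_involutive.surjective) Prod.fst_surjective G.face_surjective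

theorem tradeCond_white_black : TradeCond G.white G.black := by
  refine G.isPartialLatinSquare_black.tradeCond fun t ht ↦ ?_
  obtain ⟨d, rfl⟩ := mem_white.1 ht
  exact ⟨⟨_, G.vert_flipDart_ne d, G.mk_mem_black d⟩, ⟨_, G.prev_edge_ne d, G.prev_mem_black d⟩,
    ⟨_, G.face_flipDart_ne d, G.flipDart_mem_black d⟩⟩

theorem tradeCond_black_white : TradeCond G.black G.white := by
  refine G.isPartialLatinSquare_white.tradeCond fun t ht ↦ ?_
  obtain ⟨d, rfl⟩ := mem_black.1 ht
  obtain ⟨next, rfl⟩ := G.prev_surjective d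
  refine ⟨⟨_, (G.vert_flipDart_ne _).symm, G.mk_mem_white _⟩,
    ⟨next.1, (G.prev_edge_ne next).symm, ?_⟩, ⟨_, G.face_flipDart_ne _, G.flipDart_mem_white _⟩⟩
  simpa only [G.vert_flipDart_prev, G.face_prev] using G.mk_mem_white next

theorem white_subset_of_tradeCond {W' B' : Finset (V × E × F)} (hW : W' ⊆ G.white)
    (hB : B' ⊆ G.black) (hne : W'.Nonempty) (hWB : TradeCond W' B') (hBW : TradeCond B' W') :
    G.white ⊆ W' := by
  have hwhite := G.isPartialLatinSquare_white
  have hblack := G.isPartialLatinSquare_black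
  have hflip : ∀ d, (G.vert d, d.1, G.face d) ∈ W' →
      (G.vert (flipDart d), d.1, G.face (flipDart d)) ∈ W' := fun d hd ↦
    hBW.symbol_mem hwhite hW (hWB.row_mem hblack hB hd (G.mk_mem_black d)) (G.flipDart_mem_white d)
  have hprev : ∀ d, (G.vert d, d.1, G.face d) ∈ W' →
      (G.vert (G.prev d), (G.prev d).1, G.face (G.prev d)) ∈ W' := fun d hd ↦ by
    have hmem := hWB.column_mem hblack hB hd (G.prev_mem_black d)
    rw [← G.face_prev d] at hmem
    exact hBW.row_mem hwhite hW hmem (G.mk_mem_white _)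
  let Q : Set E := {e | ∀ b, (G.vert (e, b), e, G.face (e, b)) ∈ W'}
  have hmemQ : ∀ d : E × Bool, (G.vert d, d.1, G.face d) ∈ W' → d.1 ∈ Q := by
    rintro d hd b
    obtain h | h := eq_or_eq_flipDart (show (d.1, b).1 = d.1 from rfl)
    · rwa [h]
    · rw [h]; exact hflip d hd
  have hQ : Q = Set.univ := by
    refine G.connected Q ?_ fun d d' hprev' hd ↦ ?_
    · obtain ⟨t, ht⟩ := hne
      obtain ⟨d, rfl⟩ := mem_white.1 (hW ht)
      exact ⟨d.1, hmemQ d ht⟩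
    · obtain rfl : G.prev d = d' := G.eq_of_end_corner_eq
        ((G.vert_flipDart_prev d).trans hprev'.1.symm) ((G.face_prev d).trans hprev'.2.symm)
      exact hmemQ _ (hprev d (hd d.2))
  intro t ht
  obtain ⟨d, rfl⟩ := mem_white.1 ht
  exact (hQ ▸ Set.mem_univ d.1 : d.1 ∈ Q) d.2

/-- The latin bitrade of a graph on the sphere, the sphere being recognised by its Euler
characteristic. -/
def toBitrade [Fintype V] [Fintype F]
    (euler : Fintype.card V + Fintype.card F = Fintype.card E + 2) : SphericalLatinBitrade where
  R := V
  C := E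
  S := F
  instR := inferInstance
  instC := inferInstance
  instS := inferInstance
  W := G.white
  B := G.black
  W_nonempty := let ⟨e⟩ := G.nonempty_edge; ⟨_, G.mk_mem_white (e, false)⟩
  B_nonempty := let ⟨e⟩ := G.nonempty_edge; ⟨_, G.mk_mem_black (e, false)⟩
  W_pls := G.isPartialLatinSquare_white
  B_pls := G.isPartialLatinSquare_black
  tradeWB := G.tradeCond_white_black
  tradeBW := G.tradeCond_black_white
  connected := by
    rintro ⟨W', B', hW, hB, hne, -, hWB, hBW⟩
    exact hW.2 (G.white_subset_of_tradeCond hW.1 hB.1 hne hWB hBW)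
  spherical := by
    rw [G.card_white]
    omega

end SurfaceGraph

section Groups

theorem nonempty_torsion_addEquiv_of_prod {A L K : Type*} [AddCommGroup A] [AddCommGroup L]
    [AddCommGroup K] [IsAddTorsionFree L] [Finite K] (e : A ≃+ L × K) :
    Nonempty (AddCommGroup.torsion A ≃+ K) := by
  have hfst : ∀ x ∈ AddCommGroup.torsion A, (e x).1 = 0 := fun x hx ↦
    (isOfFinAddOrder_iff_eq_zero _).1
      (((AddMonoidHom.fst L K).comp e.toAddMonoidHom).isOfFinAddOrder hx)
  refine ⟨AddEquiv.ofBijective (((AddMonoidHom.snd L K).comp e.toAddMonoidHom).comp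
    (AddCommGroup.torsion A).subtype) ⟨?_, fun k ↦ ?_⟩⟩
  · rw [injective_iff_map_eq_zero]
    intro x hx
    exact Subtype.ext (e.map_eq_zero_iff.1 (Prod.ext (hfst x x.2) hx))
  · have hk : IsOfFinAddOrder (e.symm (0, k)) :=
      (e.symm.toAddMonoidHom.comp (AddMonoidHom.inr L K)).isOfFinAddOrder
        (isOfFinAddOrder_of_finite k)
    exact ⟨⟨e.symm (0, k), hk⟩, by simp⟩

theorem nonempty_groupAW_addEquiv_of_universal (T : SphericalLatinBitrade) {M : Type*}
    [AddCommGroup M] (γ : T.R ⊕ T.C ⊕ T.S → M)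
    (hrel : ∀ t ∈ T.W, γ (.inl t.1) + γ (.inr (.inl t.2.1)) + γ (.inr (.inr t.2.2)) = 0)
    (hgen : AddSubgroup.closure (Set.range γ) = ⊤)
    (huniv : ∃ θ : M →+ groupAW T, ∀ z, θ (γ z) = QuotientAddGroup.mk (FreeAbelianGroup.of z)) :
    Nonempty (groupAW T ≃+ M) := by
  have hker : bitradeRelations T ≤ (FreeAbelianGroup.lift γ).ker := by
    rw [bitradeRelations, AddSubgroup.closure_le]
    rintro _ ⟨t, ht, rfl⟩
    simpa using hrel t ht
  let φ : groupAW T →+ M := QuotientAddGroup.lift _ (FreeAbelianGroup.lift γ) hker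
  obtain ⟨θ, hθ⟩ := huniv
  have hφ : ∀ z, φ (QuotientAddGroup.mk (FreeAbelianGroup.of z)) = γ z := fun z ↦
    FreeAbelianGroup.lift_apply_of γ z
  refine ⟨φ.toAddEquiv θ ?_ ?_⟩
  · refine QuotientAddGroup.addMonoidHom_ext _ (FreeAbelianGroup.lift_ext _ _ fun z ↦ ?_)
    exact (congrArg θ (hφ z)).trans (hθ z)
  · refine AddMonoidHom.eq_of_eqOn_dense hgen ?_
    rintro _ ⟨z, rfl⟩
    exact (congrArg φ (hθ z)).trans (hφ z)

variable {n : ℕ}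

theorem exists_addMonoidHom_int_prod_zmod {A : Type*} [AddCommGroup A] (s t : A) {p q : A}
    (hp : n • p = 0) (hq : n • q = 0) :
    ∃ θ : (ℤ × ℤ) × (ZMod n × ZMod n) →+ A,
      θ ((1, 0), 0) = s ∧ θ ((0, 1), 0) = t ∧ θ (0, (1, 0)) = p ∧ θ (0, (0, 1)) = q := by
  let onZMod (r : A) (hr : n • r = 0) : ZMod n →+ A := ZMod.lift n ⟨zmultiplesHom A r, by simpa⟩
  have honZMod : ∀ r hr, onZMod r hr 1 = r := fun r hr ↦ by
    simpa using ZMod.lift_coe n ⟨zmultiplesHom A r, by simpa⟩ 1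
  refine ⟨((zmultiplesHom A s).coprod (zmultiplesHom A t)).coprod
    ((onZMod p hp).coprod (onZMod q hq)), ?_⟩
  simp [honZMod]

theorem addSubgroup_int_prod_zmod_eq_top {H : AddSubgroup ((ℤ × ℤ) × (ZMod n × ZMod n))}
    (hs : ((1, 0), 0) ∈ H) (ht : ((0, 1), 0) ∈ H) (hp : (0, (1, 0)) ∈ H) (hq : (0, (0, 1)) ∈ H) :
    H = ⊤ := by
  rw [eq_top_iff]
  rintro ⟨⟨i, j⟩, ⟨k, l⟩⟩ -
  obtain ⟨k, rfl⟩ := ZMod.intCast_surjective k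
  obtain ⟨l, rfl⟩ := ZMod.intCast_surjective l
  simpa using H.add_mem (H.add_mem (H.zsmul_mem hs i) (H.zsmul_mem ht j))
    (H.add_mem (H.zsmul_mem hp k) (H.zsmul_mem hq l))

end Groups

namespace SurfaceGraph

variable {V E F : Type} (G : SurfaceGraph V E F)

/-- Conjugate harmonic functions on the vertices and on the faces: along every edge, the increment
of `x` from one end to the other equals that of `y` from the right face to the left one. -/
def IsHarmonicPair {A : Type*} [AddCommGroup A] (x : V → A) (y : F → A) : Prop :=
  ∀ e, x (G.vert (e, false)) + y (G.face (e, false)) = x (G.vert (e, true)) + y (G.face (e, true))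

/-- Each triple of `G.white` reads `-c = x + y`, so the columns can be eliminated from `A_W`: this
group is the target of the universal pair of conjugate harmonic functions. -/
theorem nonempty_groupAW_addEquiv [Fintype V] [Fintype E] [Fintype F]
    (euler : Fintype.card V + Fintype.card F = Fintype.card E + 2)
    {M : Type*} [AddCommGroup M] {α : V → M} {β : F → M} (hαβ : G.IsHarmonicPair α β)
    (hgen : AddSubgroup.closure (Set.range α ∪ Set.range β) = ⊤)
    (huniv : ∀ {A : Type} [AddCommGroup A] {x : V → A} {y : F → A}, G.IsHarmonicPair x y →
      ∃ θ : M →+ A, (∀ v, θ (α v) = x v) ∧ ∀ f, θ (β f) = y f) :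
    Nonempty (groupAW (G.toBitrade euler) ≃+ M) := by
  have hflip : ∀ d : E × Bool,
      α (G.vert d) + β (G.face d) = α (G.vert (d.1, false)) + β (G.face (d.1, false)) := by
    rintro ⟨e, _ | _⟩
    exacts [rfl, (hαβ e).symm]
  let u (z : V ⊕ E ⊕ F) : groupAW (G.toBitrade euler) :=
    QuotientAddGroup.mk (FreeAbelianGroup.of z)
  have hu : ∀ d : E × Bool,
      u (.inl (G.vert d)) + u (.inr (.inr (G.face d))) = -u (.inr (.inl d.1)) := fun d ↦ by
    rw [eq_neg_iff_add_eq_zero, add_right_comm]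
    exact (QuotientAddGroup.eq_zero_iff _).2
      (AddSubgroup.subset_closure ⟨_, G.mk_mem_white d, rfl⟩)
  refine nonempty_groupAW_addEquiv_of_universal (G.toBitrade euler) (Sum.elim α (Sum.elim
    (fun e ↦ -(α (G.vert (e, false)) + β (G.face (e, false)))) β)) ?_ ?_ ?_
  · intro t ht
    obtain ⟨d, rfl⟩ := mem_white.1 ht
    change α (G.vert d) + -(α (G.vert (d.1, false)) + β (G.face (d.1, false))) + β (G.face d) = 0
    rw [← hflip d]
    abel
  · refine top_le_iff.1 (hgen.ge.trans (AddSubgroup.closure_mono (Set.union_subset ?_ ?_)))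
    · rintro _ ⟨v, rfl⟩
      exact ⟨.inl v, rfl⟩
    · rintro _ ⟨f, rfl⟩
      exact ⟨.inr (.inr f), rfl⟩
  · obtain ⟨θ, hα, hβ⟩ := huniv (x := fun v ↦ u (.inl v)) (y := fun f ↦ u (.inr (.inr f)))
      fun e ↦ (hu (e, false)).trans (hu (e, true)).symm
    refine ⟨θ, ?_⟩
    rintro (v | e | f)
    · exact hα v
    · change θ (-(α (G.vert (e, false)) + β (G.face (e, false)))) = u (.inr (.inl e))
      rw [map_neg, map_add, hα, hβ, hu, neg_neg]
    · exact hβ f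

end SurfaceGraph

namespace Tetrahedron

/-- The positions on three paths with `a i` edges each: the edge number `k` on the path `i`, or the
vertex at its end. -/
abbrev Position (a : Fin 3 → ℕ+) : Type := (i : Fin 3) × Fin (a i)

section Node

variable {a : Fin 3 → ℕ+}

/-- The vertices on the path `i`, which starts at the common origin `none`. -/
def node (i : Fin 3) : Fin (a i + 1) → Option (Position a) :=
  Fin.cases none fun k ↦ some ⟨i, k⟩

theorem node_eq_node_iff {i j : Fin 3} {k : Fin (a i + 1)} {l : Fin (a j + 1)} :
    node i k = node j l ↔ (k : ℕ) = l ∧ (i = j ∨ (k : ℕ) = 0) := by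
  induction k using Fin.cases with
  | zero => induction l using Fin.cases <;> simp [node]
  | succ k =>
    induction l using Fin.cases with
    | zero => simp [node]
    | succ l =>
      simp only [node, Fin.cases_succ, Option.some.injEq, Sigma.mk.injEq, Fin.val_succ]
      refine ⟨?_, ?_⟩
      · rintro ⟨rfl, h⟩
        simp [eq_of_heq h]
      · rintro ⟨h, rfl | h⟩
        · simp [Fin.ext_iff, Nat.succ_injective h]
        · simp at h

variable (a) in
/-- The end of the path `i`. -/
def top (i : Fin 3) : Option (Position a) := node i (Fin.last (a i))

theorem top_injective : Injective (top a) := fun i _ h ↦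
  (node_eq_node_iff.1 h).2.resolve_right (a i).ne_zero

theorem node_castSucc_ne_top {i j : Fin 3} (k : Fin (a i)) : node i k.castSucc ≠ top a j := by
  intro h
  obtain ⟨hk, rfl | h₀⟩ := node_eq_node_iff.1 h
  · exact k.2.ne hk
  · exact (a j).ne_zero (hk.symm.trans h₀)

theorem node_succ_eq_top {i : Fin 3} {k : Fin (a i)} (hk : (k : ℕ) + 1 = a i) :
    node i k.succ = top a i :=
  node_eq_node_iff.2 ⟨hk, .inl rfl⟩

end Node

variable {a b : Fin 3 → ℕ+}

variable (a b) in
/-- The start vertices of the darts: `Sum.inl` is an edge on a path, oriented away from the origin,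
and `Sum.inr ⟨i, k⟩` one of the `b i` parallel edges from `top a (i + 1)` to `top a (i + 2)`. -/
def vert : (Position a ⊕ Position b) × Bool → Option (Position a)
  | (.inl x, false) => node x.1 x.2.castSucc
  | (.inl x, true) => node x.1 x.2.succ
  | (.inr y, false) => top a (y.1 + 1)
  | (.inr y, true) => top a (y.1 + 2)

/-- The dual dart. -/
def dualDart (d : (Position a ⊕ Position b) × Bool) : (Position b ⊕ Position a) × Bool :=
  (d.1.swap, d.2)

variable (a b) in
/-- The left faces of the darts; the dual graph is a graph of the same form. -/
def face (d : (Position a ⊕ Position b) × Bool) : Option (Position b) := vert b a (dualDart d)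

@[simp]
theorem dualDart_dualDart (d : (Position a ⊕ Position b) × Bool) : dualDart (dualDart d) = d := by
  simp [dualDart]

theorem isPrevDart_dual {d d' : (Position a ⊕ Position b) × Bool}
    (h : IsPrevDart (vert a b) (face a b) d' d) :
    IsPrevDart (vert b a) (face b a) (flipDart (dualDart d')) (dualDart d) := by
  refine ⟨?_, ?_⟩
  · rw [flipDart_flipDart]
    exact h.2
  · change vert a b (dualDart (dualDart (flipDart d'))) = vert a b (dualDart (dualDart d))
    rw [dualDart_dualDart, dualDart_dualDart]
    exact h.1

section Darts

variable {i : Fin 3} {k l : Fin (a i)}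

theorem isPrevDart_inl_false (h : (k : ℕ) + 1 = l) :
    IsPrevDart (vert a b) (face a b) (.inl ⟨i, k⟩, false) (.inl ⟨i, l⟩, false) :=
  ⟨node_eq_node_iff.2 ⟨h, .inl rfl⟩, rfl⟩

theorem isPrevDart_inl_true (h : (k : ℕ) + 1 = l) :
    IsPrevDart (vert a b) (face a b) (.inl ⟨i, l⟩, true) (.inl ⟨i, k⟩, true) :=
  ⟨node_eq_node_iff.2 ⟨h.symm, .inl rfl⟩, rfl⟩

theorem isPrevDart_origin {m : Fin (a (i + 2))} (hk : (k : ℕ) = 0) (hm : (m : ℕ) = 0) :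
    IsPrevDart (vert a b) (face a b) (.inl ⟨i + 2, m⟩, true) (.inl ⟨i, k⟩, false) :=
  ⟨node_eq_node_iff.2 ⟨hm.trans hk.symm, .inr hm⟩, congrArg (top b) (by grind : i + 2 + 2 = i + 1)⟩

theorem isPrevDart_top {m : Fin (b (i + 2))} (hk : (k : ℕ) + 1 = a i)
    (hm : (m : ℕ) + 1 = b (i + 2)) :
    IsPrevDart (vert a b) (face a b) (.inr ⟨i + 2, m⟩, true) (.inl ⟨i, k⟩, true) := by
  refine ⟨?_, node_succ_eq_top hm⟩
  change top a (i + 2 + 1) = node i k.succ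
  rw [node_succ_eq_top hk]
  congr 1
  grind

end Darts

theorem exists_isPrevDart_inl (x : Position a) (s : Bool) :
    ∃ d', IsPrevDart (vert a b) (face a b) d' (.inl x, s) := by
  obtain ⟨i, k, hk⟩ := x
  cases s with
  | false =>
    cases k with
    | zero => exact ⟨_, isPrevDart_origin (m := ⟨0, (a _).pos⟩) rfl rfl⟩
    | succ k => exact ⟨_, isPrevDart_inl_false (k := ⟨k, by omega⟩) rfl⟩
  | true =>
    obtain hk' | hk' := (Nat.succ_le_of_lt hk).lt_or_eq
    · exact ⟨_, isPrevDart_inl_true (l := ⟨k + 1, hk'⟩) rfl⟩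
    · exact ⟨_, isPrevDart_top (m := ⟨b (i + 2) - 1, Nat.sub_lt (b _).pos one_pos⟩) hk'
        (PNat.natPred_add_one _)⟩

theorem exists_isPrevDart (d : (Position a ⊕ Position b) × Bool) :
    ∃ d', IsPrevDart (vert a b) (face a b) d' d := by
  obtain ⟨x | y, s⟩ := d
  · exact exists_isPrevDart_inl x s
  · obtain ⟨d', hd'⟩ := exists_isPrevDart_inl (b := a) y s
    exact ⟨_, isPrevDart_dual hd'⟩

theorem vert_flipDart_ne (d : (Position a ⊕ Position b) × Bool) :
    vert a b (flipDart d) ≠ vert a b d := by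
  obtain ⟨⟨i, k⟩ | ⟨i, k⟩, _ | _⟩ := d
  · exact fun h ↦ by simpa using (node_eq_node_iff.1 h).1
  · exact fun h ↦ by simpa using (node_eq_node_iff.1 h).1
  · exact top_injective.ne (by grind : i + 2 ≠ i + 1)
  · exact top_injective.ne (by grind : i + 1 ≠ i + 2)

theorem inl_eq_of_corner_eq {x x' : Position a} {s s' : Bool}
    (hv : vert a b (.inl x, s) = vert a b (.inl x', s'))
    (hf : face a b (.inl x, s) = face a b (.inl x', s')) :
    ((.inl x, s) : (Position a ⊕ Position b) × Bool) = (.inl x', s') := by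
  obtain ⟨i, k⟩ := x
  obtain ⟨j, l⟩ := x'
  cases s <;> cases s' <;> have hkl := node_eq_node_iff.1 hv <;> have hij := top_injective hf
  · obtain rfl : i = j := add_right_cancel hij
    rw [show k = l from Fin.ext hkl.1]
  · have hne : i ≠ j := by grind
    simpa [hne] using hkl.1.symm.trans (hkl.2.resolve_left hne)
  · have hne : i ≠ j := by grind
    simpa using hkl.2.resolve_left hne
  · obtain rfl : i = j := add_right_cancel hij
    rw [show k = l from Fin.ext (Nat.succ_injective hkl.1)]

theorem eq_true_and_eq_of_vert_inl_eq_top {x : Position a} {s : Bool} {j : Fin 3}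
    (h : vert a b (.inl x, s) = top a j) : s = true ∧ x.1 = j := by
  cases s with
  | false => exact absurd h (node_castSucc_ne_top _)
  | true => exact ⟨rfl, (node_eq_node_iff.1 h).2.resolve_right (Nat.succ_ne_zero _)⟩

theorem face_inl_ne_face_inr {x : Position a} {y : Position b} {s s' : Bool}
    (hv : vert a b (.inl x, s) = vert a b (.inr y, s')) :
    face a b (.inl x, s) ≠ face a b (.inr y, s') := by
  intro hf
  obtain rfl : s = true := by
    cases s' <;> exact (eq_true_and_eq_of_vert_inl_eq_top hv).1
  obtain ⟨rfl, hy⟩ : s' = true ∧ y.1 = x.1 + 2 := eq_true_and_eq_of_vert_inl_eq_top (b := a) hf.symm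
  have hx : x.1 = y.1 + 2 := (eq_true_and_eq_of_vert_inl_eq_top hv).2
  grind

theorem eq_of_corner_eq {d d' : (Position a ⊕ Position b) × Bool}
    (hv : vert a b d = vert a b d') (hf : face a b d = face a b d') : d = d' := by
  obtain ⟨x | y, s⟩ := d <;> obtain ⟨x' | y', s'⟩ := d'
  · exact inl_eq_of_corner_eq hv hf
  · exact absurd hf (face_inl_ne_face_inr hv)
  · exact absurd hf.symm (face_inl_ne_face_inr hv.symm)
  · exact congrArg dualDart (inl_eq_of_corner_eq (b := a) hf hv)

theorem vert_surjective : Surjective (vert a b)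
  | none => ⟨(.inl ⟨0, ⟨0, (a 0).pos⟩⟩, false), rfl⟩
  | some x => ⟨(.inl x, true), rfl⟩

theorem face_surjective : Surjective (face a b) := fun f ↦
  let ⟨d, hd⟩ := vert_surjective (b := a) f
  ⟨dualDart d, by rwa [face, dualDart_dualDart]⟩

section Connected

variable {Q : Set (Position a ⊕ Position b)}

variable (Q) in
/-- The set of edges `Q` is closed under going back along the boundaries of faces. -/
def IsPrevClosed : Prop :=
  ∀ d d', IsPrevDart (vert a b) (face a b) d' d → d.1 ∈ Q → d'.1 ∈ Q

theorem IsPrevClosed.dual (hQ : IsPrevClosed Q) : IsPrevClosed (Sum.swap ⁻¹' Q) :=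
  fun _ _ h ↦ hQ _ _ (isPrevDart_dual h)

theorem IsPrevClosed.first_mem (hQ : IsPrevClosed Q) {i : Fin 3} {k : ℕ} (hk : k < a i)
    (h : .inl ⟨i, k, hk⟩ ∈ Q) : .inl ⟨i, 0, (a i).pos⟩ ∈ Q := by
  induction k with
  | zero => exact h
  | succ k ih => exact ih (by omega) (hQ _ _ (isPrevDart_inl_false rfl) h)

theorem IsPrevClosed.mem_of_first_mem (hQ : IsPrevClosed Q) {i : Fin 3} {k : ℕ} (hk : k < a i)
    (h : .inl ⟨i, 0, (a i).pos⟩ ∈ Q) : .inl ⟨i, k, hk⟩ ∈ Q := by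
  induction k with
  | zero => exact h
  | succ k ih => exact hQ _ _ (isPrevDart_inl_true rfl) (ih (by omega))

theorem IsPrevClosed.inl_mem (hQ : IsPrevClosed Q) {x : Position a} (hx : .inl x ∈ Q)
    (y : Position a) : .inl y ∈ Q := by
  have hstep : ∀ i, .inl ⟨i, 0, (a i).pos⟩ ∈ Q → .inl ⟨i + 2, 0, (a (i + 2)).pos⟩ ∈ Q :=
    fun i ↦ hQ _ _ (isPrevDart_origin rfl rfl)
  have hfirst := hQ.first_mem x.2.2 hx
  refine hQ.mem_of_first_mem y.2.2 ?_
  obtain h | h | h : y.1 = x.1 ∨ y.1 = x.1 + 2 ∨ y.1 = x.1 + 2 + 2 := by grind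
  · rw [h]; exact hfirst
  · rw [h]; exact hstep _ hfirst
  · rw [h]; exact hstep _ (hstep _ hfirst)

theorem IsPrevClosed.exists_inr_mem (hQ : IsPrevClosed Q) {x : Position a} (hx : .inl x ∈ Q) :
    ∃ y, .inr y ∈ Q :=
  have hlast : .inl ⟨x.1, a x.1 - 1, Nat.sub_lt (a _).pos one_pos⟩ ∈ Q := hQ.inl_mem hx _
  ⟨_, hQ _ _ (isPrevDart_top (m := ⟨b (x.1 + 2) - 1, Nat.sub_lt (b _).pos one_pos⟩)
    (PNat.natPred_add_one _) (PNat.natPred_add_one _)) hlast⟩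

theorem IsPrevClosed.eq_univ_of_inl_mem (hQ : IsPrevClosed Q) {x : Position a}
    (hx : .inl x ∈ Q) : Q = Set.univ := by
  obtain ⟨y, hy⟩ := hQ.exists_inr_mem hx
  rw [Set.eq_univ_iff_forall]
  rintro (x' | y')
  · exact hQ.inl_mem hx x'
  · exact hQ.dual.inl_mem (x := y) hy y'

theorem IsPrevClosed.eq_univ (hQ : IsPrevClosed Q) (hne : Q.Nonempty) : Q = Set.univ := by
  obtain ⟨x | y, h⟩ := hne
  · exact hQ.eq_univ_of_inl_mem h
  · obtain ⟨x, hx⟩ := hQ.dual.exists_inr_mem (x := y) h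
    exact hQ.eq_univ_of_inl_mem (x := x) hx

end Connected

variable (a b) in
/-- The complete graph on four vertices drawn on the sphere, in which the three edges at the
vertex `none` are replaced by paths with `a i` edges, and the edge opposite to the path `i` by
`b i` parallel edges. -/
def graph : SurfaceGraph (Option (Position a)) (Position a ⊕ Position b) (Option (Position b)) where
  vert := vert a b
  face := face a b
  vert_flipDart_ne := vert_flipDart_ne
  face_flipDart_ne d := vert_flipDart_ne (dualDart d)
  exists_prev := exists_isPrevDart
  eq_of_corner_eq _ _ := eq_of_corner_eq
  vert_surjective := vert_surjective
  face_surjective := face_surjective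
  nonempty_edge := ⟨.inl ⟨0, 0, (a 0).pos⟩⟩
  connected _ hne hQ := IsPrevClosed.eq_univ hQ hne

theorem euler : Fintype.card (Option (Position a)) + Fintype.card (Option (Position b)) =
    Fintype.card (Position a ⊕ Position b) + 2 := by
  simp only [Fintype.card_option, Fintype.card_sum]
  ring

section Harmonic

variable {A B : Type*} [AddCommGroup A] [AddCommGroup B]

/-- The potential on the paths with value `o` at the origin and constant increment `f i` along
the path `i`. -/
def progression (o : A) (f : Fin 3 → A) : Option (Position a) → A
  | none => o
  | some x => o + (x.2 + 1 : ℕ) • f x.1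

theorem progression_node (o : A) (f : Fin 3 → A) (i : Fin 3) (k : Fin (a i + 1)) :
    progression o f (node i k) = o + (k : ℕ) • f i := by
  induction k using Fin.cases <;> simp [node, progression]

theorem progression_top (o : A) (f : Fin 3 → A) (i : Fin 3) :
    progression o f (top a i) = o + (a i : ℕ) • f i :=
  progression_node o f i (Fin.last (a i))

theorem map_progression (θ : A →+ B) (o : A) (f : Fin 3 → A) (v : Option (Position a)) :
    θ (progression o f v) = progression (θ o) (fun i ↦ θ (f i)) v := by
  cases v <;> simp [progression]

theorem eq_progression_of_increment {x : Option (Position a) → A} {f : Fin 3 → A}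
    (h : ∀ y : Position a, x (node y.1 y.2.succ) = x (node y.1 y.2.castSucc) + f y.1) :
    x = progression (x none) f := by
  have hnode : ∀ i (k : Fin (a i + 1)), x (node i k) = x none + (k : ℕ) • f i := by
    intro i k
    induction k using Fin.induction with
    | zero => simp [node]
    | succ k ih => rw [h ⟨i, k⟩, ih, Fin.val_succ, succ_nsmul, add_assoc, Fin.val_castSucc]
  funext v
  cases v with
  | none => rfl
  | some y => exact hnode y.1 y.2.succ

variable (a) in
/-- The increments, along the three edges opposite to the paths, of the potential with increments
`f` along the paths. -/
def curl (f : Fin 3 → A) (i : Fin 3) : A :=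
  (a (i + 1) : ℕ) • f (i + 1) - (a (i + 2) : ℕ) • f (i + 2)

theorem map_curl (θ : A →+ B) (f : Fin 3 → A) (i : Fin 3) :
    θ (curl a f i) = curl a (fun j ↦ θ (f j)) i := by
  simp [curl]

theorem progression_top_sub (o : A) (f : Fin 3 → A) (i : Fin 3) :
    progression o f (top a (i + 1)) - progression o f (top a (i + 2)) = curl a f i := by
  simp [progression_top, curl]

theorem isHarmonicPair_progression {f g : Fin 3 → A} (hf : f = curl b g) (hg : g = curl a f)
    (o o' : A) : (graph a b).IsHarmonicPair (progression o f) (progression o' g) := by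
  rintro (⟨i, k⟩ | ⟨i, k⟩)
  · change progression o f (node i k.castSucc) + progression o' g (top b (i + 1)) =
      progression o f (node i k.succ) + progression o' g (top b (i + 2))
    have hi : f i = _ := (congrFun hf i).trans (progression_top_sub o' g i).symm
    rw [progression_node, progression_node, Fin.val_succ, succ_nsmul, hi, Fin.val_castSucc]
    abel
  · change progression o f (top a (i + 1)) + progression o' g (node i k.castSucc) =
      progression o f (top a (i + 2)) + progression o' g (node i k.succ)
    have hi : g i = _ := (congrFun hg i).trans (progression_top_sub o f i).symm
    rw [progression_node, progression_node, Fin.val_succ, succ_nsmul, hi, Fin.val_castSucc]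
    abel

theorem exists_eq_progression_of_isHarmonicPair {x : Option (Position a) → A}
    {y : Option (Position b) → A} (h : (graph a b).IsHarmonicPair x y) :
    ∃ f g, f = curl b g ∧ g = curl a f ∧
      x = progression (x none) f ∧ y = progression (y none) g := by
  let f (i : Fin 3) : A := y (top b (i + 1)) - y (top b (i + 2))
  let g (i : Fin 3) : A := x (top a (i + 1)) - x (top a (i + 2))
  have hx : x = progression (x none) f := eq_progression_of_increment fun z ↦ by
    have hz : x (node z.1 z.2.castSucc) + y (top b (z.1 + 1)) =
      x (node z.1 z.2.succ) + y (top b (z.1 + 2)) := h (.inl z)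
    rw [← add_sub_assoc, hz, add_sub_cancel_right]
  have hy : y = progression (y none) g := eq_progression_of_increment fun z ↦ by
    have hz : x (top a (z.1 + 1)) + y (node z.1 z.2.castSucc) =
      x (top a (z.1 + 2)) + y (node z.1 z.2.succ) := h (.inr z)
    rw [← add_sub_assoc, add_comm (y _), hz, add_sub_cancel_left]
  refine ⟨f, g, funext fun i ↦ ?_, funext fun i ↦ ?_, hx, hy⟩
  · rw [← progression_top_sub (y none), ← hy]
  · rw [← progression_top_sub (x none), ← hx]

/-- The second elementary symmetric function of the weights. -/
def pairSum (a : Fin 3 → ℕ+) : ℕ := a 0 * a 1 + a 1 * a 2 + a 2 * a 0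

theorem pairSum_eq (a : Fin 3 → ℕ+) (i : Fin 3) :
    pairSum a = a i * a (i + 1) + a (i + 1) * a (i + 2) + a (i + 2) * a i := by
  fin_cases i <;>
    simp only [pairSum, Fin.isValue, Fin.zero_eta, Fin.mk_one, Fin.reduceFinMk, Fin.reduceAdd,
      zero_add] <;>
    ring

theorem sum_curl (f : Fin 3 → A) : ∑ i, curl a f i = 0 := by
  simp only [curl, Fin.sum_univ_three, Fin.isValue, Fin.reduceAdd, zero_add]
  abel

theorem curl_smul_curl (t : ℕ+) (f : Fin 3 → A) (i : Fin 3) :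
    curl (t • a) (curl a f) i =
      (t * (a (i + 1) * a (i + 2)) : ℕ) • ∑ j, f j - (t * pairSum a) • f i := by
  have hsum : ∑ j, f j = f i + f (i + 1) + f (i + 2) := by
    fin_cases i <;>
      simp only [Fin.sum_univ_three, Fin.isValue, Fin.zero_eta, Fin.mk_one, Fin.reduceFinMk,
        Fin.reduceAdd, zero_add] <;>
      abel
  have h₁ : i + 1 + 2 = i := by grind
  have h₂ : i + 2 + 1 = i := by grind
  have h₃ : i + 2 + 2 = i + 1 := by grind
  have h₄ : i + 1 + 1 = i + 2 := by grind
  simp only [hsum, pairSum_eq a i, curl, h₁, h₂, h₃, h₄, Pi.smul_apply, smul_eq_mul, PNat.mul_coe]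
  module

theorem eq_curl_smul_curl_iff {t : ℕ+} {f : Fin 3 → A} :
    f = curl (t • a) (curl a f) ↔ ∑ i, f i = 0 ∧ ∀ i, (t * pairSum a + 1) • f i = 0 := by
  have hiff (hf : ∑ i, f i = 0) (i : Fin 3) :
      f i = curl (t • a) (curl a f) i ↔ (t * pairSum a + 1) • f i = 0 := by
    rw [curl_smul_curl, hf, smul_zero, zero_sub, eq_neg_iff_add_eq_zero, succ_nsmul']
  refine ⟨fun h ↦ ?_, fun ⟨hf, h⟩ ↦ funext fun i ↦ (hiff hf i).2 (h i)⟩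
  have hf : ∑ i, f i = 0 := by
    rw [h]
    exact sum_curl _
  exact ⟨hf, fun i ↦ (hiff hf i).1 (congrFun h i)⟩

end Harmonic

section CanonicalGroup

/-- The increments on the paths in the universal solution of `eq_curl_smul_curl_iff`. -/
def universalIncrement (n : ℕ) : Fin 3 → (ℤ × ℤ) × (ZMod n × ZMod n) :=
  ![(0, (1, 0)), (0, (0, 1)), (0, (-1, -1))]

theorem sum_universalIncrement (n : ℕ) : ∑ i, universalIncrement n i = 0 := by
  simp [universalIncrement, Fin.sum_univ_three]

theorem nsmul_universalIncrement (n : ℕ) (i : Fin 3) : n • universalIncrement n i = 0 := by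
  fin_cases i <;> simp [universalIncrement]

theorem map_universalIncrement {n : ℕ} {A : Type*} [AddCommGroup A]
    (θ : (ℤ × ℤ) × (ZMod n × ZMod n) →+ A) {f : Fin 3 → A} (hf : ∑ i, f i = 0)
    (h₀ : θ (0, (1, 0)) = f 0) (h₁ : θ (0, (0, 1)) = f 1) :
    (fun i ↦ θ (universalIncrement n i)) = f := by
  have hsum : ∑ i, θ (universalIncrement n i) = ∑ i, f i := by
    rw [← map_sum, sum_universalIncrement, map_zero, hf]
  rw [Fin.sum_univ_three, Fin.sum_univ_three] at hsum
  have h₀' : θ (universalIncrement n 0) = f 0 := h₀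
  have h₁' : θ (universalIncrement n 1) = f 1 := h₁
  funext i
  fin_cases i
  · exact h₀'
  · exact h₁'
  · rwa [h₀', h₁', add_right_inj] at hsum

variable {n : ℕ} {t : ℕ+}

theorem exists_addMonoidHom_of_isHarmonicPair (hn : n = t * pairSum a + 1) {A : Type*}
    [AddCommGroup A] {x : Option (Position a) → A} {y : Option (Position (t • a)) → A}
    (h : (graph a (t • a)).IsHarmonicPair x y) :
    ∃ θ : (ℤ × ℤ) × (ZMod n × ZMod n) →+ A,
      (∀ v, θ (progression ((1, 0), 0) (universalIncrement n) v) = x v) ∧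
      ∀ v, θ (progression ((0, 1), 0) (curl a (universalIncrement n)) v) = y v := by
  obtain ⟨f, g, hf, rfl, hx, hy⟩ := exists_eq_progression_of_isHarmonicPair h
  obtain ⟨hsum, htorsion⟩ := eq_curl_smul_curl_iff.1 hf
  rw [← hn] at htorsion
  obtain ⟨θ, hs, ht, h₀, h₁⟩ :=
    exists_addMonoidHom_int_prod_zmod (x none) (y none) (htorsion 0) (htorsion 1)
  have hθ := map_universalIncrement θ hsum h₀ h₁
  refine ⟨θ, fun v ↦ ?_, fun v ↦ ?_⟩
  · rw [map_progression, hθ, hs, ← hx]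
  · simp only [map_progression, map_curl, hθ, ht, ← hy]

theorem nonempty_groupAW_addEquiv (hn : n = t * pairSum a + 1) :
    Nonempty (groupAW ((graph a (t • a)).toBitrade euler) ≃+ (ℤ × ℤ) × (ZMod n × ZMod n)) := by
  have hcurl : universalIncrement n = curl (t • a) (curl a (universalIncrement n)) :=
    eq_curl_smul_curl_iff.2 ⟨sum_universalIncrement n, hn ▸ nsmul_universalIncrement n⟩
  refine (graph a (t • a)).nonempty_groupAW_addEquiv euler
    (isHarmonicPair_progression hcurl rfl ((1, 0), 0) ((0, 1), 0)) ?_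
    (exists_addMonoidHom_of_isHarmonicPair hn)
  set H := AddSubgroup.closure
    (Set.range (progression (a := a) ((1, 0), 0) (universalIncrement n)) ∪
      Set.range (progression (a := t • a) ((0, 1), 0) (curl a (universalIncrement n))))
  have hx : ∀ v, progression ((1, 0), 0) (universalIncrement n) v ∈ H := fun v ↦
    AddSubgroup.subset_closure (.inl ⟨v, rfl⟩)
  have hy : ∀ v, progression ((0, 1), 0) (curl a (universalIncrement n)) v ∈ H := fun v ↦
    AddSubgroup.subset_closure (.inr ⟨v, rfl⟩)
  have hincrement : ∀ i, universalIncrement n i ∈ H := fun i ↦ by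
    simpa [progression] using H.sub_mem (hx (some ⟨i, 0, (a i).pos⟩)) (hx none)
  exact addSubgroup_int_prod_zmod_eq_top (hx none) (hy none) (hincrement 0) (hincrement 1)

theorem nonempty_canonicalGroup_addEquiv (hn : n = t * pairSum a + 1) :
    Nonempty (CanonicalGroup ((graph a (t • a)).toBitrade euler) ≃+ ZMod n × ZMod n) := by
  obtain ⟨e⟩ := nonempty_groupAW_addEquiv hn
  have : NeZero n := ⟨by omega⟩
  exact nonempty_torsion_addEquiv_of_prod e

end CanonicalGroup

/-- Write `n - 1 = 2 ^ k * m` with `m` odd: if `m = 2 * c + 1` with `c ≥ 1` use the weights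
`1, 1, c`, and if `m = 1` use the weights `1, 2, 2`, with `pairSum = 8`. -/
theorem exists_eq_mul_pairSum_add_one {n : ℕ} (hn : 4 ≤ n) (h5 : n ≠ 5) :
    ∃ (t : ℕ+) (a : Fin 3 → ℕ+), n = t * pairSum a + 1 := by
  obtain ⟨k, m, ⟨c, rfl⟩, h⟩ := Nat.exists_eq_two_pow_mul_odd (show n - 1 ≠ 0 by omega)
  obtain rfl : n = 2 ^ k * (2 * c + 1) + 1 := by omega
  cases c with
  | zero =>
    have hk : 3 ≤ k := by
      by_contra! hk
      interval_cases k <;> simp at hn h5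
    obtain ⟨k, rfl⟩ := Nat.exists_eq_add_of_le hk
    refine ⟨2 ^ k, ![1, 2, 2], ?_⟩
    rw [show pairSum ![1, 2, 2] = 8 from rfl, PNat.pow_coe, PNat.val_ofNat]
    ring
  | succ c =>
    have hsum : pairSum ![1, 1, c.succPNat] = 1 * 1 + 1 * (c + 1) + (c + 1) * 1 := rfl
    refine ⟨2 ^ k, ![1, 1, c.succPNat], ?_⟩
    rw [hsum, PNat.pow_coe, PNat.val_ofNat]
    ring

end Tetrahedron

theorem exists_spherical_bitrade_canonical_group_ZnZn_general {n : ℕ} (hn : 4 ≤ n) (h5 : n ≠ 5) :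
    ∃ T : SphericalLatinBitrade, Nonempty (CanonicalGroup T ≃+ (ZMod n × ZMod n)) := by
  obtain ⟨t, a, hta⟩ := Tetrahedron.exists_eq_mul_pairSum_add_one hn h5
  exact ⟨_, Tetrahedron.nonempty_canonicalGroup_addEquiv hta⟩

theorem mul_add_mul_add_mul_eq_three_or_five_le {a b c : ℕ} (ha : 1 ≤ a) (hb : 1 ≤ b)
    (hc : 1 ≤ c) : a * b + b * c + c * a = 3 ∨ 5 ≤ a * b + b * c + c * a := by
  obtain h | h | h | ⟨rfl, rfl, rfl⟩ : 2 ≤ a ∨ 2 ≤ b ∨ 2 ≤ c ∨ a = 1 ∧ b = 1 ∧ c = 1 := by omega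
  · right; nlinarith
  · right; nlinarith
  · right; nlinarith
  · left; rfl

/-- Let `n ≥ 2` be such that either `n = ab + bc + ca + 1` for some `a, b, c ≥ 1`, or `n`
is one of the exceptional values `7, 11, 19, 23, 31, 43, 59, 71, 79, 103, 131, 191, 211,
331, 463`.  Then there is a spherical latin bitrade whose canonical group is isomorphic to
`ℤ/n ⊕ ℤ/n`. -/
theorem exists_spherical_bitrade_canonical_group_ZnZn
    (n : ℕ) (hn : 2 ≤ n)
    (h : (∃ a b c : ℕ, 1 ≤ a ∧ 1 ≤ b ∧ 1 ≤ c ∧ n = a * b + b * c + c * a + 1) ∨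
      n ∈ [7, 11, 19, 23, 31, 43, 59, 71, 79, 103, 131, 191, 211, 331, 463]) :
    ∃ T : SphericalLatinBitrade,
      Nonempty (CanonicalGroup T ≃+ (ZMod n × ZMod n)) := by
  suffices hlarge : 4 ≤ n ∧ n ≠ 5 from
    exists_spherical_bitrade_canonical_group_ZnZn_general hlarge.1 hlarge.2
  obtain ⟨a, b, c, ha, hb, hc, rfl⟩ | h := h
  · have := mul_add_mul_add_mul_eq_three_or_five_le ha hb hc
    omega
  · fin_cases h <;> simp
end

section
/- Let p, a ≥ 2 and x, y, ℓ ≥ 0 and m ≥ 2 be integers, let r = p(x+1) + a − x − 1 and s = p(y+1) + a − y − 1, and let t_{i,j} be integers for 1 ≤ i ≤ m and 1 ≤ j ≤ ℓ. Let L be the (x+y+m+2) × (x+y+ℓ+3) integer matrix whose columns are grouped as: column 1, column 2, an X-block of x columns (columns 3 to x+2), a Y-block of y columns (columns x+3 to x+y+2), column x+y+3, and a T-block of ℓ columns; and whose rows are: Row 1 has entry p in column 1, −p+1 in column 2, −1 in column x+y+3, and zeros elsewhere; Row 2 has −p in column 1, r in column 2, −p in every X-column, x+1−a in column x+y+3,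 and zeros elsewhere; for 1 ≤ i ≤ x, Row 2+i has −p+1 in column 2, p in the i-th X-column, −1 in column x+y+3, and zeros elsewhere; for 1 ≤ j ≤ y, Row 2+x+j has −1 in column 2, p in the j-th Y-column, −p+1 in column x+y+3, and zeros elsewhere; Row x+y+3 has y+1−a in column 2, −p in every Y-column, s in column x+y+3, entries t_{1,1}, …, t_{1,ℓ} in the T-block, and zeros elsewhere; Row x+y+4 has −1 in column 2, −p+1 in column x+y+3, entries t_{2,1}, …, t_{2,ℓ} in the T-block, and zeros elsewhere; for 3 ≤ i ≤ m, Row x+y+i+2 has entries t_{i,1}, …, t_{i,ℓ} in the T-block and zeros elsewhere. Then L is equivalent over ℤ to the (x+y+m+2) × (x+y+ℓ+3) matrix L' whose only nonzero entries are: entry 1 in position (1, column 1); entry a·p in position (2, column 2); entry p in position (2+i, i-th X-column) for 1 ≤ i ≤ x and in position (2+x+j, j-th Y-column) for 1 ≤ j ≤ y; entry p in position (x+y+3, column x+y+3) together with t_{1,1}, …, t_{1,ℓ} in the T-block of row x+y+3; entry −p in position (x+y+4, column x+y+3) together with t_{2,1}, …, t_{2,ℓ} in the T-block of row x+y+4;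 and entries t_{i,1}, …, t_{i,ℓ} in the T-block of row x+y+i+2 for 3 ≤ i ≤ m. -/
/-- Two integer matrices of the same shape are equivalent over `ℤ` if one is obtained from
the other by multiplying on the left and right by square integer matrices invertible
over `ℤ`. -/
def IntEquiv {m n : ℕ} (A B : Matrix (Fin m) (Fin n) ℤ) : Prop :=
  ∃ (U : Matrix (Fin m) (Fin m) ℤ) (V : Matrix (Fin n) (Fin n) ℤ),
    IsUnit U.det ∧ IsUnit V.det ∧ U * A * V = B

/-- The matrix `L` of Lemma 7 (the "prime plus composites" reduction lemma), with 0-based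
indexing: column `0` is "column 1", column `1` is "column 2", columns `2, …, x+1` form the
X-block, columns `x+2, …, x+y+1` form the Y-block, column `x+y+2` is "column x+y+3", and
columns `x+y+3, …, x+y+ℓ+2` form the T-block; rows `0` and `1` are "Row 1" and "Row 2",
rows `2, …, x+1` are the X-rows, rows `x+2, …, x+y+1` are the Y-rows, and rows
`x+y+2, …, x+y+m+1` carry the entries `t_{i,j}` in the T-block (rows `x+y+2` and `x+y+3`,
i.e. "Row x+y+3" and "Row x+y+4", also carry special entries). -/
def lemmaMatrixL (p a x y l m : ℕ) (t : Fin m → Fin l → ℤ) :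
    Matrix (Fin (x + y + m + 2)) (Fin (x + y + l + 3)) ℤ :=
  Matrix.of fun i j =>
    if hj : x + y + 3 ≤ (j : ℕ) then
      if hi : x + y + 2 ≤ (i : ℕ) then
        t ⟨(i : ℕ) - (x + y + 2), by have := i.isLt; omega⟩
          ⟨(j : ℕ) - (x + y + 3), by have := j.isLt; omega⟩
      else 0
    else
      if (i : ℕ) = 0 then
        if (j : ℕ) = 0 then (p : ℤ)
        else if (j : ℕ) = 1 then 1 - (p : ℤ)
        else if (j : ℕ) = x + y + 2 then -1
        else 0
      else if (i : ℕ) = 1 then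
        if (j : ℕ) = 0 then -(p : ℤ)
        else if (j : ℕ) = 1 then (p : ℤ) * ((x : ℤ) + 1) + (a : ℤ) - (x : ℤ) - 1
        else if 2 ≤ (j : ℕ) ∧ (j : ℕ) ≤ x + 1 then -(p : ℤ)
        else if (j : ℕ) = x + y + 2 then (x : ℤ) + 1 - (a : ℤ)
        else 0
      else if (i : ℕ) ≤ x + 1 then
        if (j : ℕ) = 1 then 1 - (p : ℤ)
        else if (j : ℕ) = (i : ℕ) then (p : ℤ)
        else if (j : ℕ) = x + y + 2 then -1
        else 0
      else if (i : ℕ) ≤ x + y + 1 then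
        if (j : ℕ) = 1 then -1
        else if (j : ℕ) = (i : ℕ) then (p : ℤ)
        else if (j : ℕ) = x + y + 2 then 1 - (p : ℤ)
        else 0
      else if (i : ℕ) = x + y + 2 then
        if (j : ℕ) = 1 then (y : ℤ) + 1 - (a : ℤ)
        else if x + 2 ≤ (j : ℕ) ∧ (j : ℕ) ≤ x + y + 1 then -(p : ℤ)
        else if (j : ℕ) = x + y + 2 then (p : ℤ) * ((y : ℤ) + 1) + (a : ℤ) - (y : ℤ) - 1
        else 0
      else if (i : ℕ) = x + y + 3 then
        if (j : ℕ) = 1 then -1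
        else if (j : ℕ) = x + y + 2 then 1 - (p : ℤ)
        else 0
      else 0

/-- The reduced matrix `L'` of Lemma 7, with the same 0-based indexing conventions as
`lemmaMatrixL`: its only nonzero entries are a `1` in position `(0,0)`, `a·p` in position
`(1,1)`, the diagonal block `p·I_{x+y}` on the X- and Y-rows/columns, `p` and `−p` in
column `x+y+2` on rows `x+y+2` and `x+y+3`, and the unchanged entries `t_{i,j}` in the
T-block. -/
def lemmaMatrixL' (p a x y l m : ℕ) (t : Fin m → Fin l → ℤ) :
    Matrix (Fin (x + y + m + 2)) (Fin (x + y + l + 3)) ℤ :=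
  Matrix.of fun i j =>
    if hj : x + y + 3 ≤ (j : ℕ) then
      if hi : x + y + 2 ≤ (i : ℕ) then
        t ⟨(i : ℕ) - (x + y + 2), by have := i.isLt; omega⟩
          ⟨(j : ℕ) - (x + y + 3), by have := j.isLt; omega⟩
      else 0
    else
      if (i : ℕ) = 0 ∧ (j : ℕ) = 0 then 1
      else if (i : ℕ) = 1 ∧ (j : ℕ) = 1 then (a : ℤ) * (p : ℤ)
      else if 2 ≤ (i : ℕ) ∧ (i : ℕ) ≤ x + y + 1 ∧ (j : ℕ) = (i : ℕ) then (p : ℤ)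
      else if (i : ℕ) = x + y + 2 ∧ (j : ℕ) = x + y + 2 then (p : ℤ)
      else if (i : ℕ) = x + y + 3 ∧ (j : ℕ) = x + y + 2 then -(p : ℤ)
      else 0

/-!
Adding all columns to its left to column `x+y+3` turns that column into `p` times the difference of
the unit vectors at rows `x+y+3` and `x+y+4`. The square corner to the left of this column is then
reduced on its own: adding the X-rows to Row 2 clears the X-block of that row, each X-row or Y-row
is plus or minus Row 1 modulo `p` and so is cleared by Row 1 and its own diagonal entry `p`, and the
remaining `2 × 2` block is elementary. The part of the rows below the corner is a combination of
rows of the corner plus a combination of copies of the new column `x+y+3`, which vanishes on the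
corner, so it is cleared without touching the T-block.
-/

open Matrix

section UnimodularEquiv

variable {R : Type*} [CommRing R]
variable {m n m₁ m₂ n₁ n₂ : Type*}
variable [Fintype m] [DecidableEq m] [Fintype n] [DecidableEq n]
variable [Fintype m₁] [DecidableEq m₁] [Fintype n₁] [DecidableEq n₁]
variable [Fintype m₂] [DecidableEq m₂] [Fintype n₂] [DecidableEq n₂]

/-- Equivalence of rectangular matrices over a commutative ring: `IntEquiv` with `ℤ` replaced by
any commutative ring and with arbitrary finite index types, so that block matrices indexed by sum
types are covered. -/
def UnimodularEquiv (A B : Matrix m n R) : Prop :=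
  ∃ (U : Matrix m m R) (V : Matrix n n R), IsUnit U.det ∧ IsUnit V.det ∧ U * A * V = B

namespace UnimodularEquiv

theorem trans {A B C : Matrix m n R} :
    UnimodularEquiv A B → UnimodularEquiv B C → UnimodularEquiv A C := by
  rintro ⟨U, V, hU, hV, rfl⟩ ⟨U', V', hU', hV', rfl⟩
  refine ⟨U' * U, V * V', ?_, ?_, by simp only [Matrix.mul_assoc]⟩
  · rw [det_mul]
    exact hU'.mul hU
  · rw [det_mul]
    exact hV.mul hV'

instance : Trans (UnimodularEquiv (R := R) (m := m) (n := n)) UnimodularEquiv UnimodularEquiv :=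
  ⟨trans⟩

theorem submatrix_equiv {A B : Matrix m n R} (h : UnimodularEquiv A B) (e : m₁ ≃ m) (f : n₁ ≃ n) :
    UnimodularEquiv (A.submatrix e f) (B.submatrix e f) := by
  obtain ⟨U, V, hU, hV, rfl⟩ := h
  exact ⟨U.submatrix e e, V.submatrix f f, by rwa [det_submatrix_equiv_self],
    by rwa [det_submatrix_equiv_self], by simp only [submatrix_mul_equiv]⟩

theorem submatrix_equiv_iff {A B : Matrix m n R} (e : m₁ ≃ m) (f : n₁ ≃ n) :
    UnimodularEquiv (A.submatrix e f) (B.submatrix e f) ↔ UnimodularEquiv A B :=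
  ⟨fun h => by simpa using h.submatrix_equiv e.symm f.symm, fun h => h.submatrix_equiv e f⟩

theorem fromBlocks_diagonal {A A' : Matrix m₁ n₁ R} (h : UnimodularEquiv A A')
    (D : Matrix m₂ n₂ R) : UnimodularEquiv (fromBlocks A 0 0 D) (fromBlocks A' 0 0 D) := by
  obtain ⟨U, V, hU, hV, rfl⟩ := h
  exact ⟨fromBlocks U 0 0 1, fromBlocks V 0 0 1, by simpa, by simpa, by simp [fromBlocks_multiply]⟩

theorem fromBlocks_sub_mul_right (A : Matrix m₁ n₁ R) (B : Matrix m₁ n₂ R) (C : Matrix m₂ n₁ R)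
    (D : Matrix m₂ n₂ R) (K : Matrix n₁ n₂ R) :
    UnimodularEquiv (fromBlocks A B C D) (fromBlocks A (B - A * K) C (D - C * K)) :=
  ⟨1, fromBlocks 1 (-K) 0 1, by simp, by simp,
    by simp [fromBlocks_multiply, neg_add_eq_sub]⟩

theorem fromBlocks_sub_mul_left (A : Matrix m₁ n₁ R) (B : Matrix m₁ n₂ R) (C : Matrix m₂ n₁ R)
    (D : Matrix m₂ n₂ R) (S : Matrix m₁ m₂ R) :
    UnimodularEquiv (fromBlocks A B C D) (fromBlocks (A - S * C) (B - S * D) C D) :=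
  ⟨fromBlocks 1 (-S) 0 1, 1, by simp, by simp,
    by simp [fromBlocks_multiply, ← sub_eq_add_neg]⟩

theorem fromBlocks_clear_lower (A : Matrix m₁ n₁ R) (D : Matrix m₂ n₂ R) (S : Matrix m₂ m₁ R)
    (K : Matrix n₂ n₁ R) :
    UnimodularEquiv (fromBlocks A 0 (S * A + D * K) D) (fromBlocks A 0 0 D) :=
  ⟨fromBlocks 1 0 (-S) 1, fromBlocks 1 0 (-K) 1, by simp, by simp,
    by simp [fromBlocks_multiply]⟩

end UnimodularEquiv

end UnimodularEquiv

section BlockForm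

variable {R : Type*} [CommRing R]

theorem unimodularEquiv_fin_two (p a : R) :
    UnimodularEquiv !![p, 1 - p; -p, p + a - 1] !![1, 0; 0, a * p] := by
  refine ⟨!![1, 0; 1 - a, 1], !![1, p - 1; 1, p], by simp [det_fin_two], by simp [det_fin_two], ?_⟩
  ext i j
  fin_cases i <;> fin_cases j <;> simp <;> ring

variable (X Y : Type*)

/-- The square part of `lemmaMatrixL` in Rows 1 and 2, the X-rows and the Y-rows, and in columns 1
and 2, the X-block and the Y-block. The index type `Fin 2 ⊕ (X ⊕ Y)` keeps the paper's order. -/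
def lemmaMatrixCorner [Fintype X] [DecidableEq X] [DecidableEq Y] (p a : R) :
    Matrix (Fin 2 ⊕ (X ⊕ Y)) (Fin 2 ⊕ (X ⊕ Y)) R :=
  fromBlocks
    !![p, 1 - p; -p, p * (Fintype.card X + 1) + a - Fintype.card X - 1]
    (of ![0, Sum.elim (fun _ => -p) 0])
    (of (Sum.elim (fun _ => ![0, 1 - p]) (fun _ => ![0, -1])))
    (diagonal fun _ => p)

/-- The part of column `x+y+3` of `lemmaMatrixL` lying to the right of `lemmaMatrixCorner`. -/
def lemmaMatrixSide [Fintype X] (p a : R) : Fin 2 ⊕ (X ⊕ Y) → R :=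
  Sum.elim ![-1, Fintype.card X + 1 - a] (Sum.elim (-1) fun _ => 1 - p)

/-- The part of `lemmaMatrixL` below `lemmaMatrixCorner`. The rows are indexed by an arbitrary type
`M`, and row `i` is the combination of the paper's rows `x+y+3` and `x+y+4` with coefficients `u i`
and `v i`; for the paper's matrix `u` and `v` are the first two standard basis vectors. -/
def lemmaMatrixLower {M : Type*} [Fintype Y] (p a : R) (u v : M → R) :
    Matrix M (Fin 2 ⊕ (X ⊕ Y)) R :=
  vecMulVec u (Sum.elim ![0, Fintype.card Y + 1 - a] (Sum.elim 0 fun _ => -p)) +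
    vecMulVec v (Sum.elim ![0, -1] 0)

/-- The block form of `lemmaMatrixL`, with the T-block `t`, over a commutative ring and with `u`
and `v` as in `lemmaMatrixLower`. -/
def lemmaMatrixBlockL {M T : Type*} [Fintype X] [DecidableEq X] [Fintype Y] [DecidableEq Y]
    (p a : R) (u v : M → R) (t : Matrix M T R) :
    Matrix ((Fin 2 ⊕ (X ⊕ Y)) ⊕ M) ((Fin 2 ⊕ (X ⊕ Y)) ⊕ (Fin 1 ⊕ T)) R :=
  fromBlocks
    (lemmaMatrixCorner X Y p a)
    (fromCols (replicateCol (Fin 1) (lemmaMatrixSide X Y p a)) 0)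
    (lemmaMatrixLower X Y p a u v)
    (fromCols
      (replicateCol (Fin 1)
        ((p * (Fintype.card Y + 1) + a - Fintype.card Y - 1) • u + (1 - p) • v))
      t)

/-- The block form of `lemmaMatrixL'`, with parameters as in `lemmaMatrixBlockL`. -/
def lemmaMatrixBlockL' {M T : Type*} [DecidableEq X] [DecidableEq Y] (p a : R) (u v : M → R)
    (t : Matrix M T R) :
    Matrix ((Fin 2 ⊕ (X ⊕ Y)) ⊕ M) ((Fin 2 ⊕ (X ⊕ Y)) ⊕ (Fin 1 ⊕ T)) R :=
  fromBlocks (fromBlocks !![1, 0; 0, a * p] 0 0 (diagonal fun _ => p)) 0 0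
    (fromCols (replicateCol (Fin 1) (p • (u - v))) t)

variable [Fintype X] [Fintype Y]

theorem lemmaMatrixLower_mulVec_neg_one {M : Type*} (p a : R) (u v : M → R) :
    lemmaMatrixLower X Y p a u v *ᵥ (-1) =
      (p * (Fintype.card Y + 1) + a - Fintype.card Y - 1) • u + (1 - p) • v - p • (u - v) := by
  ext i
  simp [lemmaMatrixLower, add_mulVec, vecMulVec_mulVec, dotProduct]
  ring

variable [DecidableEq X] [DecidableEq Y]

theorem lemmaMatrixCorner_unimodularEquiv (p a : R) :
    UnimodularEquiv (lemmaMatrixCorner X Y p a)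
      (fromBlocks !![1, 0; 0, a * p] 0 0 (diagonal fun _ => p)) := by
  let N : Matrix (Fin 2) (Fin 2) R := !![p, 1 - p; -p, p + a - 1]
  let S : Matrix (Fin 2) (X ⊕ Y) R := of ![0, Sum.elim (-1) 0]
  let B : Matrix (X ⊕ Y) (Fin 2) R := of (Sum.elim (fun _ => ![0, 1 - p]) (fun _ => ![0, -1]))
  let D : Matrix (X ⊕ Y) (X ⊕ Y) R := diagonal fun _ => p
  let Q : Matrix (X ⊕ Y) (Fin 2) R := of (Sum.elim (fun _ => ![1, 0]) (fun _ => ![-1, 0]))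
  let K : Matrix (X ⊕ Y) (Fin 2) R := of (Sum.elim (fun _ => ![-1, 0]) (fun _ => ![1, -1]))
  have hN : !![p, 1 - p; -p, p * (Fintype.card X + 1) + a - Fintype.card X - 1] - S * B = N := by
    ext i j
    fin_cases i <;> fin_cases j <;> simp [N, S, B, vecMul, dotProduct]
    ring
  have hD : of ![0, Sum.elim (fun _ => -p) 0] - S * D = 0 := by
    ext i (j | j) <;> fin_cases i <;> simp [S, D]
  have hB : Q * N + D * K = B := by
    ext (i | i) j <;> fin_cases j <;>
      simp [B, Q, N, D, K, mul_apply, diagonal_apply, Fin.sum_univ_two]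
    ring
  calc
    UnimodularEquiv (lemmaMatrixCorner X Y p a) (fromBlocks N 0 B D) := by
      have h : UnimodularEquiv (lemmaMatrixCorner X Y p a) _ :=
        .fromBlocks_sub_mul_left _ _ B D S
      rwa [hN, hD] at h
    UnimodularEquiv _ (fromBlocks N 0 0 D) := by
      simpa only [hB] using UnimodularEquiv.fromBlocks_clear_lower N D Q K
    UnimodularEquiv _ _ := (unimodularEquiv_fin_two p a).fromBlocks_diagonal D

theorem lemmaMatrixCorner_mulVec_neg_one (p a : R) :
    lemmaMatrixCorner X Y p a *ᵥ (-1) = lemmaMatrixSide X Y p a := by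
  ext (i | i | i)
  · fin_cases i
    · simp [lemmaMatrixCorner, lemmaMatrixSide, mulVec, dotProduct, Fin.sum_univ_two]
    · simp [lemmaMatrixCorner, lemmaMatrixSide, mulVec, dotProduct, Fin.sum_univ_two]
      ring
  · simp [lemmaMatrixCorner, lemmaMatrixSide, mulVec, dotProduct, diagonal_apply]
  · simp [lemmaMatrixCorner, lemmaMatrixSide, mulVec, dotProduct, diagonal_apply, neg_add_eq_sub]

theorem lemmaMatrixLower_eq_mul_corner_add {M : Type*} (p a : R) (u v : M → R) :
    lemmaMatrixLower X Y p a u v =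
      (vecMulVec u (Sum.elim ![0, -1] (-1)) - vecMulVec v (Sum.elim ![1, 0] 0) :
            Matrix M (Fin 2 ⊕ (X ⊕ Y)) R) *
          lemmaMatrixCorner X Y p a +
        vecMulVec (p • (u - v)) (Sum.elim ![-1, 1] 0) := by
  have hu : (Sum.elim ![0, -1] (-1) : Fin 2 ⊕ (X ⊕ Y) → R) ᵥ* lemmaMatrixCorner X Y p a =
      Sum.elim ![0, Fintype.card Y + 1 - a] (Sum.elim 0 fun _ => -p) -
        p • Sum.elim ![-1, 1] 0 := by
    ext (i | i | i)
    · fin_cases i <;> simp [lemmaMatrixCorner, vecMul, dotProduct, Fin.sum_univ_two]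
      ring
    · simp [lemmaMatrixCorner, vecMul, dotProduct, diagonal_apply]
    · simp [lemmaMatrixCorner, vecMul, dotProduct, diagonal_apply]
  have hv : (Sum.elim ![1, 0] 0 : Fin 2 ⊕ (X ⊕ Y) → R) ᵥ* lemmaMatrixCorner X Y p a =
      -Sum.elim ![0, -1] 0 - p • Sum.elim ![-1, 1] 0 := by
    ext (i | i | i)
    · fin_cases i <;> simp [lemmaMatrixCorner, vecMul, dotProduct, Fin.sum_univ_two]
    · simp [lemmaMatrixCorner, vecMul, dotProduct]
    · simp [lemmaMatrixCorner, vecMul, dotProduct]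
  rw [Matrix.sub_mul, vecMulVec_mul, vecMulVec_mul, hu, hv]
  ext i j
  simp only [lemmaMatrixLower, Matrix.add_apply, Matrix.sub_apply, vecMulVec_apply, Pi.sub_apply,
    Pi.smul_apply, Pi.neg_apply, smul_eq_mul]
  ring

theorem lemmaMatrix_reduction_general {M T : Type*} [Fintype M] [DecidableEq M] [Fintype T]
    [DecidableEq T] (p a : R) (u v : M → R) (t : Matrix M T R) :
    UnimodularEquiv (lemmaMatrixBlockL X Y p a u v t) (lemmaMatrixBlockL' X Y p a u v t) := by
  let C : Matrix M (Fin 1 ⊕ T) R := fromCols (replicateCol (Fin 1) (p • (u - v))) t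
  let K : Matrix (Fin 2 ⊕ (X ⊕ Y)) (Fin 1 ⊕ T) R := fromCols (replicateCol (Fin 1) (-1)) 0
  let H : Matrix (Fin 1 ⊕ T) (Fin 2 ⊕ (X ⊕ Y)) R :=
    fromRows (replicateRow (Fin 1) (Sum.elim ![-1, 1] 0)) 0
  have hside : fromCols (replicateCol (Fin 1) (lemmaMatrixSide X Y p a)) 0 -
      lemmaMatrixCorner X Y p a * K = 0 := by
    rw [mul_fromCols, ← replicateCol_mulVec, lemmaMatrixCorner_mulVec_neg_one, Matrix.mul_zero,
      sub_self]
  have hlower :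
      fromCols
          (replicateCol (Fin 1)
            ((p * (Fintype.card Y + 1) + a - Fintype.card Y - 1) • u + (1 - p) • v)) t -
        lemmaMatrixLower X Y p a u v * K = C := by
    rw [mul_fromCols, ← replicateCol_mulVec, lemmaMatrixLower_mulVec_neg_one, Matrix.mul_zero]
    ext i (j | j) <;> simp [C]
  have hCH : C * H = vecMulVec (p • (u - v)) (Sum.elim ![-1, 1] 0) := by
    ext i j
    simp [C, H, mul_apply, vecMulVec_apply]
  calc
    UnimodularEquiv (lemmaMatrixBlockL X Y p a u v t)
        (fromBlocks (lemmaMatrixCorner X Y p a) 0 (lemmaMatrixLower X Y p a u v) C) := by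
      have h : UnimodularEquiv (lemmaMatrixBlockL X Y p a u v t) _ :=
        .fromBlocks_sub_mul_right _ _ _ _ K
      rwa [hside, hlower] at h
    UnimodularEquiv _ (fromBlocks (lemmaMatrixCorner X Y p a) 0 0 C) := by
      rw [lemmaMatrixLower_eq_mul_corner_add, ← hCH]
      exact .fromBlocks_clear_lower _ C _ H
    UnimodularEquiv _ _ := (lemmaMatrixCorner_unimodularEquiv X Y p a).fromBlocks_diagonal C

end BlockForm

section Reindexing

/-- The `k`-th standard basis vector of `ℤ^m`, understood as `0` if `m ≤ k`; for `k = 0, 1` these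
are the coefficients `u` and `v` of `lemmaMatrixLower` in the paper's matrix. -/
def intBasisVec (m k : ℕ) : Fin m → ℤ :=
  fun i => if (i : ℕ) = k then 1 else 0

/-- Concatenation of the index blocks of `lemmaMatrixCorner`: the two distinguished indices, the
X-block, the Y-block. -/
def lemmaMatrixCornerEquiv (x y : ℕ) : Fin 2 ⊕ (Fin x ⊕ Fin y) ≃ Fin (2 + (x + y)) :=
  ((Equiv.refl _).sumCongr finSumFinEquiv).trans finSumFinEquiv

/-- Concatenation of the row blocks of `lemmaMatrixBlockL`, giving the row order of
`lemmaMatrixL`. -/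
def lemmaMatrixRowEquiv (x y m : ℕ) :
    (Fin 2 ⊕ (Fin x ⊕ Fin y)) ⊕ Fin m ≃ Fin (x + y + m + 2) :=
  (((lemmaMatrixCornerEquiv x y).sumCongr (.refl _)).trans finSumFinEquiv).trans
    (finCongr (by lia))

/-- Concatenation of the column blocks of `lemmaMatrixBlockL`, giving the column order of
`lemmaMatrixL`. -/
def lemmaMatrixColEquiv (x y l : ℕ) :
    (Fin 2 ⊕ (Fin x ⊕ Fin y)) ⊕ (Fin 1 ⊕ Fin l) ≃ Fin (x + y + l + 3) :=
  (((lemmaMatrixCornerEquiv x y).sumCongr finSumFinEquiv).trans finSumFinEquiv).trans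
    (finCongr (by lia))

theorem coe_lemmaMatrixCornerEquiv (x y : ℕ) (i : Fin 2 ⊕ (Fin x ⊕ Fin y)) :
    (lemmaMatrixCornerEquiv x y i : ℕ) =
      Sum.elim (fun i : Fin 2 => (i : ℕ))
        (Sum.elim (fun i : Fin x => 2 + (i : ℕ)) fun i : Fin y => 2 + (x + i)) i := by
  rcases i with i | i | i <;> simp [lemmaMatrixCornerEquiv]

theorem coe_lemmaMatrixRowEquiv (x y m : ℕ) (i : (Fin 2 ⊕ (Fin x ⊕ Fin y)) ⊕ Fin m) :
    (lemmaMatrixRowEquiv x y m i : ℕ) =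
      Sum.elim (fun i => (lemmaMatrixCornerEquiv x y i : ℕ))
        (fun i : Fin m => 2 + (x + y) + i) i := by
  rcases i with i | i <;> simp [lemmaMatrixRowEquiv]

theorem coe_lemmaMatrixColEquiv (x y l : ℕ) (j : (Fin 2 ⊕ (Fin x ⊕ Fin y)) ⊕ (Fin 1 ⊕ Fin l)) :
    (lemmaMatrixColEquiv x y l j : ℕ) =
      Sum.elim (fun j => (lemmaMatrixCornerEquiv x y j : ℕ))
        (Sum.elim (fun _ => 2 + (x + y)) fun j : Fin l => 2 + (x + y) + (1 + j)) j := by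
  rcases j with j | j | j <;> simp [lemmaMatrixColEquiv]

variable (p a x y l m : ℕ) (t : Fin m → Fin l → ℤ)

theorem lemmaMatrixL_submatrix :
    (lemmaMatrixL p a x y l m t).submatrix (lemmaMatrixRowEquiv x y m)
        (lemmaMatrixColEquiv x y l) =
      lemmaMatrixBlockL (Fin x) (Fin y) (p : ℤ) a (intBasisVec m 0) (intBasisVec m 1) (of t) := by
  ext ((i | i | i) | i) ((j | j | j) | j | j) <;> try fin_cases i
  all_goals try fin_cases j
  all_goals simp only [lemmaMatrixL, submatrix_apply, of_apply, coe_lemmaMatrixRowEquiv,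
    coe_lemmaMatrixColEquiv, coe_lemmaMatrixCornerEquiv, Sum.elim_inl, Sum.elim_inr,
    Fin.isValue, Fin.zero_eta, Fin.mk_one, Fin.val_zero, Fin.val_one]
  all_goals simp (disch := omega) only [↓dif_pos, ↓dif_neg, ↓if_pos, ↓if_neg]
  all_goals simp [lemmaMatrixBlockL, lemmaMatrixCorner, lemmaMatrixSide, lemmaMatrixLower,
    intBasisVec, diagonal_apply, vecMulVec_apply]
  all_goals grind

theorem lemmaMatrixL'_submatrix :
    (lemmaMatrixL' p a x y l m t).submatrix (lemmaMatrixRowEquiv x y m)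
        (lemmaMatrixColEquiv x y l) =
      lemmaMatrixBlockL' (Fin x) (Fin y) (p : ℤ) a (intBasisVec m 0) (intBasisVec m 1) (of t) := by
  ext ((i | i | i) | i) ((j | j | j) | j | j) <;> try fin_cases i
  all_goals try fin_cases j
  all_goals simp only [lemmaMatrixL', submatrix_apply, of_apply, coe_lemmaMatrixRowEquiv,
    coe_lemmaMatrixColEquiv, coe_lemmaMatrixCornerEquiv, Sum.elim_inl, Sum.elim_inr,
    Fin.isValue, Fin.zero_eta, Fin.mk_one, Fin.val_zero, Fin.val_one]
  all_goals simp (disch := omega) only [↓dif_pos, ↓dif_neg, ↓if_neg]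
  all_goals simp [lemmaMatrixBlockL', intBasisVec, diagonal_apply]
  all_goals grind

end Reindexing

/-- Lemma 7: the matrix `L` is equivalent over `ℤ` to the reduced matrix `L'`. -/
theorem lemmaMatrix_reduction (p a x y l m : ℕ) (hp : 2 ≤ p) (ha : 2 ≤ a) (hm : 2 ≤ m)
    (t : Fin m → Fin l → ℤ) :
    IntEquiv (lemmaMatrixL p a x y l m t) (lemmaMatrixL' p a x y l m t) := by
  refine (UnimodularEquiv.submatrix_equiv_iff
    (lemmaMatrixRowEquiv x y m) (lemmaMatrixColEquiv x y l)).1 ?_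
  rw [lemmaMatrixL_submatrix, lemmaMatrixL'_submatrix]
  exact lemmaMatrix_reduction_general (Fin x) (Fin y) _ _ _ _ _
end

section
/- Let k ≥ 1 and m, a_1, a_2, …, a_k ≥ 2 be integers. Let L be the 2k × 2k integer matrix whose only nonzero entries are (indices 1-based, entries only where the column index is between 1 and 2k): L[1,1] = m, L[1,2] = −m+1, L[1,3] = −1; L[2,1] = −m, L[2,2] = m + a_k − 1, L[2,3] = −(a_k − 1); and for each 1 ≤ j ≤ k−1: L[2j+1, 2j] = −(a_{k−j+1} − 1), L[2j+1, 2j+1] = m + a_{k−j+1} − 1, L[2j+1, 2j+2] = −m+1, L[2j+1, 2j+3] = −1 (if 2j+3 ≤ 2k); L[2j+2, 2j] = −1, L[2j+2, 2j+1] = −m+1, L[2j+2, 2j+2] = m + a_{k−j} − 1, L[2j+2, 2j+3] = −(a_{k−j} − 1) (if 2j+3 ≤ 2k). Then the cokernel of L is isomorphic to Z_{m·a_1} ⊕ Z_{m·a_2} ⊕ … ⊕ Z_{m·a_k}. -/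
/-- The cokernel of a square integer matrix `L`: the group `ℤ^n` modulo the subgroup
generated by the rows of `L`. -/
abbrev Matrix.cokernel {n : ℕ} (L : Matrix (Fin n) (Fin n) ℤ) : Type :=
  (Fin n → ℤ) ⧸ AddSubgroup.closure (Set.range fun i => L i)

/-- The reduced asymmetric Laplacian of the digraph `D_{m;a_1,…,a_k}` (0-based indexing;
the sequence `a` is taken 1-based, i.e. `a 1, …, a k` are the relevant values): row `0` has
entries `m, −m+1, −1` in columns `0, 1, 2`; row `1` has `−m, m+a_k−1, −(a_k−1)` in columns
`0, 1, 2`; for `1 ≤ j ≤ k−1`, row `2j` has entries `−(a_{k−j+1}−1), m+a_{k−j+1}−1, −m+1, −1`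
in columns `2j−1, 2j, 2j+1, 2j+2`, and row `2j+1` has entries `−1, −m+1, m+a_{k−j}−1,
−(a_{k−j}−1)` in columns `2j−1, 2j, 2j+1, 2j+2` (entries only where the column index is
in range). -/
def laplacianDma (k m : ℕ) (a : ℕ → ℕ) : Matrix (Fin (2 * k)) (Fin (2 * k)) ℤ :=
  Matrix.of fun i j =>
    if (i : ℕ) = 0 then
      if (j : ℕ) = 0 then (m : ℤ)
      else if (j : ℕ) = 1 then 1 - (m : ℤ)
      else if (j : ℕ) = 2 then -1
      else 0
    else if (i : ℕ) = 1 then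
      if (j : ℕ) = 0 then -(m : ℤ)
      else if (j : ℕ) = 1 then (m : ℤ) + (a k : ℤ) - 1
      else if (j : ℕ) = 2 then -((a k : ℤ) - 1)
      else 0
    else if (i : ℕ) % 2 = 0 then
      if (j : ℕ) = 2 * ((i : ℕ) / 2) - 1 then -((a (k - (i : ℕ) / 2 + 1) : ℤ) - 1)
      else if (j : ℕ) = 2 * ((i : ℕ) / 2) then (m : ℤ) + (a (k - (i : ℕ) / 2 + 1) : ℤ) - 1
      else if (j : ℕ) = 2 * ((i : ℕ) / 2) + 1 then 1 - (m : ℤ)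
      else if (j : ℕ) = 2 * ((i : ℕ) / 2) + 2 then -1
      else 0
    else
      if (j : ℕ) = 2 * (((i : ℕ) - 1) / 2) - 1 then -1
      else if (j : ℕ) = 2 * (((i : ℕ) - 1) / 2) then 1 - (m : ℤ)
      else if (j : ℕ) = 2 * (((i : ℕ) - 1) / 2) + 1 then
        (m : ℤ) + (a (k - ((i : ℕ) - 1) / 2) : ℤ) - 1
      else if (j : ℕ) = 2 * (((i : ℕ) - 1) / 2) + 2 then
        -((a (k - ((i : ℕ) - 1) / 2) : ℤ) - 1)
      else 0

/-!
List the vertices as `x = (α_k, γ_k, α_{k-1}, γ_{k-1}, …)`, put `s_j = α_{k-j} - γ_{k-j}` and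
`y_j = γ_{k-j+1} - α_{k-j}` (with `y_0 = 0` and `α_0 = 0`), and solve `f_{j+1} + f_j = s_j` starting
from `f_0 = 0`. With `z_j = y_j + m f_j` and `b_j = a_{k-j+1}`, the rows of the Laplacian at
`α_{k-j}` and `γ_{k-j}` are

* `z_{j+1} + z_j - b_j y_j`,
* `b_{j+1} y_{j+1} - (z_{j+1} + z_j)`.

Their sum telescopes, so the rows generate the same group as the `z_j` and the `b_j y_j`, hence the
same group as the `z_j` and the `m b_j f_j`, for `1 ≤ j ≤ k`. Since the `z_j` and the `f_j` together
generate `ℤ^{2k}` and there are `2k` of them, they form a basis, in which the row space is diagonal.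
-/

section Quotient

variable {ι M : Type*} [AddCommGroup M] (b : Module.Basis ι ℤ M) (n : ι → ℕ)

theorem mem_closure_range_nsmul_basis_iff {v : M} :
    v ∈ AddSubgroup.closure (Set.range fun i => n i • b i) ↔ ∀ i, (n i : ℤ) ∣ b.repr v i := by
  classical
  constructor
  · intro hv i
    induction hv using AddSubgroup.closure_induction with
    | mem _ h =>
      obtain ⟨j, rfl⟩ := h
      obtain rfl | hij := eq_or_ne j i
      · simp
      · simp [hij]
    | zero => simp
    | add _ _ _ _ hu hw => simpa using dvd_add hu hw
    | neg _ _ hu => simpa using hu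
  · intro hv
    rw [← b.linearCombination_repr v, Finsupp.linearCombination_apply]
    refine sum_mem fun i _ => ?_
    obtain ⟨c, hc⟩ := hv i
    beta_reduce
    rw [hc, mul_comm, mul_smul, natCast_zsmul]
    exact zsmul_mem (AddSubgroup.subset_closure (Set.mem_range_self i)) c

/-- The coordinates with respect to the basis `b`, the `i`-th one reduced modulo `n i`. -/
noncomputable def reprMod : M →+ ∀ i, ZMod (n i) :=
  AddMonoidHom.pi fun i => (Int.castAddHom (ZMod (n i))).comp (b.coord i).toAddMonoidHom

theorem reprMod_apply (v : M) (i : ι) : reprMod b n v i = (b.repr v i : ZMod (n i)) := rfl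

theorem ker_reprMod :
    (reprMod b n).ker = AddSubgroup.closure (Set.range fun i => n i • b i) := by
  ext v
  simp only [AddMonoidHom.mem_ker, funext_iff, reprMod_apply, Pi.zero_apply,
    ZMod.intCast_zmod_eq_zero_iff_dvd, mem_closure_range_nsmul_basis_iff]

theorem reprMod_surjective [Finite ι] : Function.Surjective (reprMod b n) := by
  intro w
  choose c hc using fun i => ZMod.intCast_surjective (w i)
  cases nonempty_fintype ι
  refine ⟨b.equivFun.symm c, funext fun i => ?_⟩
  rw [reprMod_apply, ← b.equivFun_apply, LinearEquiv.apply_symm_apply, hc]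

/-- Scaling the vectors of a basis by `n` gives generators of a subgroup with quotient
`∏ i, ℤ/n i`. -/
noncomputable def quotientClosureNSMulBasisEquiv [Finite ι] :
    M ⧸ AddSubgroup.closure (Set.range fun i => n i • b i) ≃+ ∀ i, ZMod (n i) :=
  (QuotientAddGroup.quotientAddEquivOfEq (ker_reprMod b n).symm).trans
    (QuotientAddGroup.quotientKerEquivOfSurjective _ (reprMod_surjective b n))

end Quotient

/-- Factors `ℤ/1` may be dropped from a product of cyclic groups. -/
def piZModSumElimOneEquiv (ι : Type*) {κ : Type*} (n : κ → ℕ) :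
    (∀ i, ZMod (Sum.elim (fun _ : ι => 1) n i)) ≃+ ∀ j, ZMod (n j) :=
  letI : Unique (∀ i : ι, ZMod (Sum.elim (fun _ : ι => 1) n (.inl i))) :=
    inferInstanceAs (Unique (ι → ZMod 1))
  (LinearEquiv.sumPiEquivProdPi ℤ ι κ _).toAddEquiv.trans AddEquiv.uniqueProd

namespace laplacianDma

section Relations

variable {A : Type*} [AddCommGroup A] (x : ℕ → A)

/-- The difference `α_{k-j} - γ_{k-j}`, for a sequence `x` that lists
`α_k, γ_k, α_{k-1}, γ_{k-1}, …`. -/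
def alphaSubGamma (j : ℕ) : A := x (2 * j) - x (2 * j + 1)

/-- The difference `γ_{k-j+1} - α_{k-j}`, for a sequence `x` that lists
`α_k, γ_k, α_{k-1}, γ_{k-1}, …`. At `j = 0`, where there is no `γ_{k+1}`, it is set to `0`; this
lets the first two rows of the Laplacian take the same form as the others. -/
def gammaSubAlpha : ℕ → A
  | 0 => 0
  | j + 1 => x (2 * j + 1) - x (2 * j + 2)

/-- The alternating sum of the differences `α_i - γ_i` over the `j` largest indices `i`, in which
the smallest of them has sign `+`. These elements generate the cyclic factors of the cokernel. -/
def altSum : ℕ → A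
  | 0 => 0
  | j + 1 => alphaSubGamma x j - altSum j

variable (m : ℤ) (b : ℕ → ℤ)

/-- The element whose vanishing says that `γ_{k-j+1} - α_{k-j}` is `-m` times the alternating sum;
it lies in the row space. -/
def gapRelation (j : ℕ) : A := gammaSubAlpha x j + m • altSum x j

/-- The row of the Laplacian at the vertex `α_{k-j}`, with `b j` in the role of `a_{k-j+1}`. -/
def alphaRow (j : ℕ) : A :=
  m • alphaSubGamma x j + gammaSubAlpha x (j + 1) - (b j - 1) • gammaSubAlpha x j

/-- The row of the Laplacian at the vertex `γ_{k-j}`, with `b j` in the role of `a_{k-j+1}`. -/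
def gammaRow (j : ℕ) : A :=
  (b (j + 1) - 1) • gammaSubAlpha x (j + 1) - gammaSubAlpha x j - m • alphaSubGamma x j

theorem alphaRow_eq (j : ℕ) :
    alphaRow x m b j =
      gapRelation x m (j + 1) + gapRelation x m j - b j • gammaSubAlpha x j := by
  rw [alphaRow, gapRelation, gapRelation, altSum]
  module

theorem gammaRow_eq (j : ℕ) :
    gammaRow x m b j =
      b (j + 1) • gammaSubAlpha x (j + 1) - (gapRelation x m (j + 1) + gapRelation x m j) := by
  rw [gammaRow, gapRelation, gapRelation, altSum]
  module

variable {x m b} {k : ℕ} {N : AddSubgroup A}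

theorem forall_rows_mem_iff_gammaSubAlpha :
    (∀ j < k, alphaRow x m b j ∈ N ∧ gammaRow x m b j ∈ N) ↔
      ∀ j ≤ k, gapRelation x m j ∈ N ∧ b j • gammaSubAlpha x j ∈ N := by
  constructor
  · intro h j
    induction j with
    | zero => simp [gapRelation, gammaSubAlpha, altSum]
    | succ j ih =>
      intro hj
      obtain ⟨hgap, hgamma⟩ := ih (by lia)
      obtain ⟨hα, hγ⟩ := h j hj
      have hsum : gapRelation x m (j + 1) + gapRelation x m j ∈ N := by
        simpa [alphaRow_eq] using add_mem hα hgamma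
      exact ⟨by simpa using sub_mem hsum hgap, by simpa [gammaRow_eq] using add_mem hγ hsum⟩
  · intro h j hj
    obtain ⟨hgap, hgamma⟩ := h j hj.le
    obtain ⟨hgap', hgamma'⟩ := h (j + 1) hj
    rw [alphaRow_eq, gammaRow_eq]
    exact ⟨sub_mem (add_mem hgap' hgap) hgamma, sub_mem hgamma' (add_mem hgap' hgap)⟩

theorem smul_gammaSubAlpha_mem_iff {j : ℕ} (c : ℤ) (h : gapRelation x m j ∈ N) :
    c • gammaSubAlpha x j ∈ N ↔ (m * c) • altSum x j ∈ N := by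
  have hsum : c • gammaSubAlpha x j + (m * c) • altSum x j = c • gapRelation x m j := by
    rw [gapRelation]
    module
  have hmem := hsum ▸ zsmul_mem h c
  exact ⟨fun hc => (add_mem_cancel_left hc).1 hmem, fun hc => (add_mem_cancel_right hc).1 hmem⟩

theorem forall_rows_mem_iff :
    (∀ j < k, alphaRow x m b j ∈ N ∧ gammaRow x m b j ∈ N) ↔
      ∀ j < k, gapRelation x m (j + 1) ∈ N ∧ (m * b (j + 1)) • altSum x (j + 1) ∈ N := by
  simp only [forall_rows_mem_iff_gammaSubAlpha,
    and_congr_right fun h => smul_gammaSubAlpha_mem_iff _ h, ← Nat.lt_succ_iff,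
    Nat.forall_lt_succ_left]
  simp [gapRelation, gammaSubAlpha, altSum]

theorem mem_of_gapRelation_mem_of_altSum_mem (hx : x (2 * k) = 0)
    (hgap : ∀ j < k, gapRelation x m (j + 1) ∈ N) (halt : ∀ j < k, altSum x (j + 1) ∈ N)
    {p : ℕ} (hp : p ≤ 2 * k) : x p ∈ N := by
  have halpha : ∀ j < k, alphaSubGamma x j ∈ N := by
    rintro (_ | j) hj
    · simpa [altSum] using halt 0 hj
    · simpa [altSum] using add_mem (halt (j + 1) hj) (halt j (by lia))
  have hgamma : ∀ j < k, gammaSubAlpha x (j + 1) ∈ N := fun j hj => by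
    simpa [gapRelation] using sub_mem (hgap j hj) (zsmul_mem (halt j hj) m)
  induction hp using Nat.decreasingInduction with
  | self => simp [hx]
  | of_succ p hp ih =>
    suffices x p - x (p + 1) ∈ N by simpa using add_mem this ih
    obtain ⟨j, rfl | rfl⟩ := p.even_or_odd'
    · exact halpha j (by lia)
    · exact hgamma j (by lia)

end Relations

section Basis

/-- The standard basis of `ℤ^n`, continued by `0` to all natural indices. -/
def vertex (n p : ℕ) : Fin n → ℤ := fun q => if (q : ℕ) = p then 1 else 0

theorem vertex_self (n : ℕ) : vertex n n = 0 :=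
  funext fun q => if_neg q.2.ne

theorem eq_sum_smul_vertex {n : ℕ} (v : Fin n → ℤ) : v = ∑ q, v q • vertex n q := by
  ext r
  simp [vertex, Finset.sum_apply, Fin.val_inj]

variable (k : ℕ) (m : ℤ)

/-- The elements `gapRelation` and `altSum` of `ℤ^{2k}`, whose multiples generate the row space. -/
def gapAltVec : Fin k ⊕ Fin k → Fin (2 * k) → ℤ :=
  Sum.elim (fun j => gapRelation (vertex (2 * k)) m (j + 1))
    (fun j => altSum (vertex (2 * k)) (j + 1))

theorem top_le_span_gapAltVec : ⊤ ≤ Submodule.span ℤ (Set.range (gapAltVec k m)) := by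
  intro v _
  rw [eq_sum_smul_vertex v]
  refine sum_mem fun q _ => Submodule.smul_mem _ _ ?_
  exact mem_of_gapRelation_mem_of_altSum_mem (m := m) (vertex_self _)
    (N := (Submodule.span ℤ (Set.range (gapAltVec k m))).toAddSubgroup)
    (fun j hj => Submodule.subset_span ⟨.inl ⟨j, hj⟩, rfl⟩)
    (fun j hj => Submodule.subset_span ⟨.inr ⟨j, hj⟩, rfl⟩) q.2.le

/-- The basis of `ℤ^{2k}` that consists of the vectors `gapAltVec`. -/
noncomputable def gapAltBasis : Module.Basis (Fin k ⊕ Fin k) ℤ (Fin (2 * k) → ℤ) :=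
  basisOfTopLeSpanOfCardEqFinrank (gapAltVec k m) (top_le_span_gapAltVec k m) (by simp [two_mul])

theorem coe_gapAltBasis : ⇑(gapAltBasis k m) = gapAltVec k m :=
  coe_basisOfTopLeSpanOfCardEqFinrank _ _ _

end Basis

section Rows

variable {k : ℕ} (m : ℕ) (a : ℕ → ℕ) {j : ℕ}

theorem row_two_mul (hj : 2 * j < 2 * k) :
    laplacianDma k m a ⟨2 * j, hj⟩ =
      alphaRow (vertex (2 * k)) m (fun j => (a (k - j + 1) : ℤ)) j := by
  ext q
  cases j <;>
    simp only [laplacianDma, alphaRow, alphaSubGamma, gammaSubAlpha, vertex, Matrix.of_apply,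
      Pi.add_apply, Pi.sub_apply, Pi.smul_apply, Pi.zero_apply, smul_eq_mul] <;>
    grind

theorem row_two_mul_add_one (hj : 2 * j + 1 < 2 * k) :
    laplacianDma k m a ⟨2 * j + 1, hj⟩ =
      gammaRow (vertex (2 * k)) m (fun j => (a (k - j + 1) : ℤ)) j := by
  ext q
  cases j <;>
    simp only [laplacianDma, gammaRow, alphaSubGamma, gammaSubAlpha, vertex, Matrix.of_apply,
      Pi.sub_apply, Pi.smul_apply, Pi.zero_apply, smul_eq_mul] <;>
    grind

theorem forall_row_mem_iff (N : AddSubgroup (Fin (2 * k) → ℤ)) :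
    (∀ i, laplacianDma k m a i ∈ N) ↔
      ∀ j < k, alphaRow (vertex (2 * k)) m (fun j => (a (k - j + 1) : ℤ)) j ∈ N ∧
        gammaRow (vertex (2 * k)) m (fun j => (a (k - j + 1) : ℤ)) j ∈ N := by
  constructor
  · intro h j hj
    rw [← row_two_mul m a (by lia), ← row_two_mul_add_one m a (by lia)]
    exact ⟨h _, h _⟩
  · rintro h ⟨i, hi⟩
    obtain ⟨j, rfl | rfl⟩ := i.even_or_odd'
    · exact row_two_mul m a hi ▸ (h j (by lia)).1
    · exact row_two_mul_add_one m a hi ▸ (h j (by lia)).2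

theorem closure_range_eq_closure_range_nsmul_gapAltBasis :
    AddSubgroup.closure (Set.range fun i => laplacianDma k m a i) =
      AddSubgroup.closure (Set.range fun i =>
        Sum.elim (fun _ : Fin k => 1) (fun j : Fin k => m * a (j.rev + 1)) i •
          gapAltBasis k m i) := by
  refine eq_of_forall_ge_iff fun N => ?_
  simp only [AddSubgroup.closure_le, Set.range_subset_iff, SetLike.mem_coe]
  rw [forall_row_mem_iff, forall_rows_mem_iff]
  simp only [coe_gapAltBasis, gapAltVec, Sum.forall, Sum.elim_inl, Sum.elim_inr, one_smul,
    Fin.forall_iff, Fin.val_rev, forall_and, ← natCast_zsmul, Nat.cast_mul, Nat.cast_one]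

end Rows

end laplacianDma

/-- The cokernel of the reduced asymmetric Laplacian of `D_{m;a_1,…,a_k}` is isomorphic to
`ℤ/(m·a_1) ⊕ ⋯ ⊕ ℤ/(m·a_k)`. -/
theorem cokernel_laplacianDma (k m : ℕ) (hk : 1 ≤ k) (hm : 2 ≤ m) (a : ℕ → ℕ)
    (ha : ∀ i, 1 ≤ i → i ≤ k → 2 ≤ a i) :
    Nonempty ((laplacianDma k m a).cokernel ≃+
      ((i : Fin k) → ZMod (m * a ((i : ℕ) + 1)))) := by
  let diagonalize := (QuotientAddGroup.quotientAddEquivOfEq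
    (laplacianDma.closure_range_eq_closure_range_nsmul_gapAltBasis m a)).trans
      (quotientClosureNSMulBasisEquiv (laplacianDma.gapAltBasis k m) _)
  let dropTrivial := piZModSumElimOneEquiv (Fin k) fun j : Fin k => m * a (j.rev + 1)
  let reverse := RingEquiv.piCongrLeft (fun i : Fin k => ZMod (m * a (i + 1))) Fin.revPerm
  exact ⟨diagonalize.trans (dropTrivial.trans reverse.toAddEquiv)⟩
end

section
/- Let a, b, c ≥ 2 be integers and set t = a + b + c + 1. Then the cokernel of the 6 × 6 integer matrix [[c, 1−c, 0, 0, 0, 0], [−1, t−c, 0, −a, 0, −b], [0, 0, b, 1−b, 0, 0], [0, −a, −1, t−b, 0, −c], [0, 0, 0, 0, a, 1−a], [0, −b, 0, −c, −1, t−a]] is isomorphic to Z_{ab+bc+ac+1} ⊕ Z_{ab+bc+ac+1}. -/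
/-!
Listing the even rows and columns before the odd ones turns the matrix into the block matrix
`[[D, 1 - D], [-1, 1 + Λ]]`, where `D = diag(c, b, a)` and `Λ` is the Laplacian of a triangle with
edge weights `a, b, c`. The block `-1` eliminates half of the generators and leaves the cokernel of
`D * (1 + Λ) + (1 - D) = 1 + D * Λ`. Each diagonal entry of `D` is the weight of the edge opposite
to its vertex, which makes the off-diagonal entries of `D * Λ` constant along columns: with
`w = (ab, ac, bc)`, `N = ab + bc + ac + 1` and `𝟙` the all-ones vector, `1 + D * Λ = N - 𝟙 wᵀ`.
As `∑ wᵢ = N - 1`, the row space of this matrix is the kernel of `x ↦ x + (∑ xᵢ) w` modulo `N`,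
and the image of that map is the free module of vectors of sum zero.
-/

open Matrix

section RowCokernel

variable {R m m' n n' p q : Type*}

/-- The module presented by the rows of `A` as relations among the standard generators. Unlike
`Matrix.cokernel` it allows rectangular matrices over any ring, as elimination steps require. -/
abbrev RowCokernel [Ring R] (A : Matrix m n R) : Type _ :=
  (n → R) ⧸ Submodule.span R (Set.range A.row)

theorem mem_span_range_row [Semiring R] [Fintype m] {A : Matrix m n R} {x : n → R} :
    x ∈ Submodule.span R (Set.range A.row) ↔ ∃ y, y ᵥ* A = x := by
  simp [← range_vecMulLinear]

/-- For square integer matrices, `RowCokernel` is the group `Matrix.cokernel`. -/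
def cokernelAddEquivRowCokernel {k : ℕ} (L : Matrix (Fin k) (Fin k) ℤ) :
    L.cokernel ≃+ RowCokernel L :=
  QuotientAddGroup.quotientAddEquivOfEq (Submodule.span_int_eq_addSubgroupClosure _).symm

theorem map_funCongrLeft_span_range_row [Semiring R] (A : Matrix m n R) (e : m' ≃ m)
    (f : n' ≃ n) :
    (Submodule.span R (Set.range A.row)).map (LinearEquiv.funCongrLeft R R f : (n → R) →ₗ[R] _) =
      Submodule.span R (Set.range (A.submatrix e f).row) := by
  rw [Submodule.map_span, ← Set.range_comp, ← e.surjective.range_comp]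
  rfl

/-- Reordering relations and generators does not change the presented module. -/
def rowCokernelSubmatrixEquiv [Ring R] (A : Matrix m n R) (e : m' ≃ m) (f : n' ≃ n) :
    RowCokernel A ≃ₗ[R] RowCokernel (A.submatrix e f) :=
  Submodule.Quotient.equiv _ _ (LinearEquiv.funCongrLeft R R f)
    (map_funCongrLeft_span_range_row A e f)

section Elimination

variable [Ring R] [Fintype q]

/-- The substitution expressing the eliminated generators, indexed by `q`, through the remaining
ones by means of the rows of `C`. -/
def eliminationMap (C : Matrix q n R) : (q ⊕ n → R) →ₗ[R] n → R :=
  C.vecMulLinear ∘ₗ LinearMap.funLeft R R Sum.inl + LinearMap.funLeft R R Sum.inr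

theorem eliminationMap_apply (C : Matrix q n R) (z : q ⊕ n → R) :
    eliminationMap C z = (z ∘ Sum.inl) ᵥ* C + z ∘ Sum.inr :=
  rfl

theorem eliminationMap_surjective (C : Matrix q n R) : Function.Surjective (eliminationMap C) :=
  fun y => ⟨Sum.elim 0 y, by simp [eliminationMap_apply]⟩

variable [DecidableEq q] (A : Matrix p q R) (B : Matrix p n R) (C : Matrix q n R)

theorem eliminationMap_row_fromBlocks_inl (i : p) :
    eliminationMap C ((fromBlocks A B (-1) C).row (Sum.inl i)) = (A * C + B).row i :=
  rfl

theorem eliminationMap_row_fromBlocks_inr (j : q) :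
    eliminationMap C ((fromBlocks A B (-1) C).row (Sum.inr j)) = 0 := by
  have hneg : (fromBlocks A B (-1) C).row (Sum.inr j) ∘ Sum.inl = -Pi.single j 1 := by
    ext l
    simp [one_apply, Pi.single_apply, eq_comm]
  rw [eliminationMap_apply, hneg, neg_vecMul, single_one_vecMul]
  exact neg_add_cancel (C j)

theorem map_eliminationMap_span_range_row :
    (Submodule.span R (Set.range (fromBlocks A B (-1) C).row)).map (eliminationMap C) =
      Submodule.span R (Set.range (A * C + B).row) := by
  have hrows : eliminationMap C ∘ (fromBlocks A B (-1) C).row = Sum.elim (A * C + B).row 0 :=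
    funext <| Sum.rec (eliminationMap_row_fromBlocks_inl A B C)
      (eliminationMap_row_fromBlocks_inr A B C)
  rw [Submodule.map_span, ← Set.range_comp, hrows, Set.Sum.elim_range, Submodule.span_union,
    sup_eq_left, Submodule.span_le]
  rintro _ ⟨_, rfl⟩
  exact zero_mem _

theorem ker_eliminationMap_le_span_range_row :
    (eliminationMap C).ker ≤ Submodule.span R (Set.range (fromBlocks A B (-1) C).row) := by
  intro z hz
  have hinr : -((z ∘ Sum.inl) ᵥ* C) = z ∘ Sum.inr := neg_eq_of_add_eq_zero_right hz
  have hmem : z ∈ Submodule.span R (Set.range (fromCols (-1) C).row) :=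
    mem_span_range_row.mpr ⟨-(z ∘ Sum.inl), by
      rw [vecMul_fromCols, vecMul_neg, vecMul_one, neg_neg, neg_vecMul, hinr,
        Sum.elim_comp_inl_inr]⟩
  refine Submodule.span_mono ?_ hmem
  rintro _ ⟨j, rfl⟩
  exact ⟨Sum.inr j, rfl⟩

theorem comap_eliminationMap_span_range_row :
    (Submodule.span R (Set.range (A * C + B).row)).comap (eliminationMap C) =
      Submodule.span R (Set.range (fromBlocks A B (-1) C).row) := by
  rw [← map_eliminationMap_span_range_row, Submodule.comap_map_eq_self]
  exact ker_eliminationMap_le_span_range_row A B C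

/-- The relations with coefficients `-1` express the generators indexed by `q` through the others;
substituting them leaves the Schur complement. -/
noncomputable def rowCokernelFromBlocksNegOneEquiv :
    RowCokernel (fromBlocks A B (-1) C) ≃ₗ[R] RowCokernel (A * C + B) :=
  Submodule.quotEquivOfEq _ _ (by
      rw [LinearMap.ker_comp, Submodule.ker_mkQ, comap_eliminationMap_span_range_row]) ≪≫ₗ
    (Submodule.mkQ _ ∘ₗ eliminationMap C).quotKerEquivOfSurjective
      ((Submodule.mkQ_surjective _).comp (eliminationMap_surjective C))

end Elimination

end RowCokernel

section RankOnePerturbation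

variable {R : Type*} [CommRing R] {k : ℕ}

/-- The rank-one perturbation `N - 𝟙 wᵀ` of a scalar matrix, where `𝟙` is the all-ones vector. -/
def scalarSubOnesMul {ι : Type*} [DecidableEq ι] (N : R) (w : ι → R) : Matrix ι ι R :=
  N • 1 - vecMulVec 1 w

theorem vecMul_scalarSubOnesMul {ι : Type*} [Fintype ι] [DecidableEq ι] (N : R) (w y : ι → R) :
    y ᵥ* scalarSubOnesMul N w = N • y - (∑ i, y i) • w := by
  rw [scalarSubOnesMul, vecMul_sub, vecMul_smul, vecMul_one, vecMul_vecMulVec, dotProduct_one]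

theorem sum_vecMul_scalarSubOnesMul {ι : Type*} [Fintype ι] [DecidableEq ι] {N : R} {w : ι → R}
    (hw : ∑ i, w i = N - 1) (y : ι → R) :
    ∑ i, (y ᵥ* scalarSubOnesMul N w) i = ∑ i, y i := by
  simp only [vecMul_scalarSubOnesMul, Pi.sub_apply, Pi.smul_apply, smul_eq_mul,
    Finset.sum_sub_distrib, ← Finset.mul_sum, hw]
  ring

/-- `x ↦ x + (∑ i, x i) • w` modulo `N`. When `∑ i, w i ≡ -1` modulo `N` its image consists of
vectors of sum zero, which are determined by the coordinates other than the zeroth; only these are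
recorded. -/
def residueMap (N : R) (w : Fin (k + 1) → R) :
    (Fin (k + 1) → R) →ₗ[R] Fin k → R ⧸ Ideal.span {N} :=
  LinearMap.pi fun j => (Ideal.span {N}).mkQ ∘ₗ
    (LinearMap.proj j.succ +
      (∑ i, LinearMap.proj i : (Fin (k + 1) → R) →ₗ[R] R).smulRight (w j.succ))

theorem residueMap_apply (N : R) (w x : Fin (k + 1) → R) (j : Fin k) :
    residueMap N w x j = Ideal.Quotient.mk _ (x j.succ + (∑ i, x i) * w j.succ) := by
  simp [residueMap]

theorem mem_ker_residueMap {N : R} {w x : Fin (k + 1) → R} :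
    x ∈ (residueMap N w).ker ↔ ∀ j : Fin k, N ∣ x j.succ + (∑ i, x i) * w j.succ := by
  simp only [LinearMap.mem_ker, funext_iff, residueMap_apply, Pi.zero_apply,
    Ideal.Quotient.eq_zero_iff_dvd]

theorem residueMap_surjective (N : R) (w : Fin (k + 1) → R) :
    Function.Surjective (residueMap N w) := by
  intro v
  choose y hy using fun j => Ideal.Quotient.mk_surjective (v j)
  refine ⟨Fin.cons (-∑ j, y j) y, funext fun j => ?_⟩
  simp [residueMap_apply, Fin.sum_univ_succ, ← hy]

theorem span_range_row_eq_ker_residueMap {N : R} {w : Fin (k + 1) → R} (hw : ∑ i, w i = N - 1) :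
    Submodule.span R (Set.range (scalarSubOnesMul N w).row) = (residueMap N w).ker := by
  ext x
  rw [mem_span_range_row, mem_ker_residueMap]
  constructor
  · rintro ⟨y, rfl⟩ j
    rw [sum_vecMul_scalarSubOnesMul hw, vecMul_scalarSubOnesMul]
    exact ⟨y j.succ, by simp⟩
  · intro hx
    choose y hy using hx
    let z : Fin (k + 1) → R := Fin.cons (∑ i, x i - ∑ j, y j) y
    have hz : ∑ i, z i = ∑ i, x i := by simp [z, Fin.sum_univ_succ]
    have hsucc (j : Fin k) : (z ᵥ* scalarSubOnesMul N w) j.succ = x j.succ := by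
      simp [vecMul_scalarSubOnesMul, hz, z, ← hy]
    -- Both vectors have the same coordinate sum, so the remaining coordinate agrees as well.
    have hzero : (z ᵥ* scalarSubOnesMul N w) 0 = x 0 := by
      have hsum := (sum_vecMul_scalarSubOnesMul hw z).trans hz
      simpa only [Fin.sum_univ_succ (n := k), hsucc, add_left_inj] using hsum
    exact ⟨z, funext (Fin.cases hzero hsucc)⟩

/-- When `w` has sum `N - 1`, the cokernel of `N - 𝟙 wᵀ` is free over `R / N`, of rank one less
than the size of the matrix. -/
noncomputable def rowCokernelScalarSubOnesMulEquiv {N : R} {w : Fin (k + 1) → R}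
    (hw : ∑ i, w i = N - 1) :
    RowCokernel (scalarSubOnesMul N w) ≃ₗ[R] (Fin k → R ⧸ Ideal.span {N}) :=
  Submodule.quotEquivOfEq _ _ (span_range_row_eq_ker_residueMap hw) ≪≫ₗ
    (residueMap N w).quotKerEquivOfSurjective (residueMap_surjective N w)

end RankOnePerturbation

/-- The bijection placing the first and the second block at the even and the odd positions. -/
def interleave : Fin 3 ⊕ Fin 3 ≃ Fin 6 where
  toFun := Sum.elim ![0, 2, 4] ![1, 3, 5]
  invFun := ![.inl 0, .inr 0, .inl 1, .inr 1, .inl 2, .inr 2]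
  left_inv := by decide
  right_inv := by decide

section RankTwoMatrix

variable {R : Type*} [CommRing R] (a b c : R)

/-- The matrix of the theorem, over an arbitrary commutative ring. -/
def rankTwoMatrix : Matrix (Fin 6) (Fin 6) R :=
  !![c, 1 - c, 0, 0, 0, 0;
     -1, (a + b + c + 1) - c, 0, -a, 0, -b;
     0, 0, b, 1 - b, 0, 0;
     0, -a, -1, (a + b + c + 1) - b, 0, -c;
     0, 0, 0, 0, a, 1 - a;
     0, -b, 0, -c, -1, (a + b + c + 1) - a]

/-- The weighted Laplacian of a triangle whose edges `01`, `02`, `12` have weights `a`, `b`, `c`. -/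
def triangleLaplacian : Matrix (Fin 3) (Fin 3) R :=
  !![a + b, -a, -b;
     -a, a + c, -c;
     -b, -c, b + c]

theorem rankTwoMatrix_submatrix_interleave :
    (rankTwoMatrix a b c).submatrix interleave interleave =
      fromBlocks (diagonal ![c, b, a]) (1 - diagonal ![c, b, a]) (-1)
        (1 + triangleLaplacian a b c) := by
  ext (i | i) (j | j) <;> fin_cases i <;> fin_cases j <;>
    simp [rankTwoMatrix, triangleLaplacian, interleave] <;> ring

theorem diagonal_mul_one_add_triangleLaplacian_add :
    diagonal ![c, b, a] * (1 + triangleLaplacian a b c) + (1 - diagonal ![c, b, a]) =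
      scalarSubOnesMul (a * b + b * c + a * c + 1) ![a * b, a * c, b * c] := by
  ext i j
  fin_cases i <;> fin_cases j <;> simp [triangleLaplacian, scalarSubOnesMul] <;> ring

theorem cokernel_rank_two_matrix_general :
    Nonempty (RowCokernel (rankTwoMatrix a b c) ≃ₗ[R]
      (R ⧸ Ideal.span {a * b + b * c + a * c + 1}) ×
        (R ⧸ Ideal.span {a * b + b * c + a * c + 1})) := by
  have hsum : ∑ i, ![a * b, a * c, b * c] i = a * b + b * c + a * c + 1 - 1 := by
    simp only [Fin.sum_univ_three, cons_val]
    ring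
  have separate := rowCokernelSubmatrixEquiv (rankTwoMatrix a b c) interleave interleave
  rw [rankTwoMatrix_submatrix_interleave] at separate
  have eliminate := rowCokernelFromBlocksNegOneEquiv (diagonal ![c, b, a])
    (1 - diagonal ![c, b, a]) (1 + triangleLaplacian a b c)
  rw [diagonal_mul_one_add_triangleLaplacian_add] at eliminate
  exact ⟨separate ≪≫ₗ eliminate ≪≫ₗ rowCokernelScalarSubOnesMulEquiv hsum ≪≫ₗ
    LinearEquiv.finTwoArrow R _⟩

end RankTwoMatrix

/-- For integers `a, b, c ≥ 2` and `t = a + b + c + 1`, the cokernel of the displayed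
`6 × 6` matrix is isomorphic to `ℤ/(ab+bc+ac+1) ⊕ ℤ/(ab+bc+ac+1)`. -/
theorem cokernel_rank_two_matrix (a b c : ℕ) (ha : 2 ≤ a) (hb : 2 ≤ b) (hc : 2 ≤ c) :
    Nonempty
      ((!![(c : ℤ), 1 - (c : ℤ), 0, 0, 0, 0;
           -1, ((a : ℤ) + b + c + 1) - (c : ℤ), 0, -(a : ℤ), 0, -(b : ℤ);
           0, 0, (b : ℤ), 1 - (b : ℤ), 0, 0;
           0, -(a : ℤ), -1, ((a : ℤ) + b + c + 1) - (b : ℤ), 0, -(c : ℤ);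
           0, 0, 0, 0, (a : ℤ), 1 - (a : ℤ);
           0, -(b : ℤ), 0, -(c : ℤ), -1, ((a : ℤ) + b + c + 1) - (a : ℤ)]).cokernel ≃+
        (ZMod (a * b + b * c + a * c + 1) × ZMod (a * b + b * c + a * c + 1))) :=
  -- The cast of the natural number `a * b + b * c + a * c + 1` to `ℤ` is definitionally the same
  -- expression in the casts of `a`, `b` and `c`.
  let zmod := (Int.quotientSpanNatEquivZMod (a * b + b * c + a * c + 1)).toAddEquiv
  (cokernel_rank_two_matrix_general (a : ℤ) b c).map fun e =>
    (cokernelAddEquivRowCokernel _).trans (e.toAddEquiv.trans (zmod.prodCongr zmod))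
end

section
/- Let p, a ≥ 2 and x, y ≥ 0 be integers, and set r = p(x+1) + a − x − 1 and N = x + y + 3. Let L be the N × N integer matrix whose only nonzero entries are: L[1,1] = p, L[1,2] = −p+1; L[2,1] = −p, L[2,2] = r, and L[2, 2+i] = −p for 1 ≤ i ≤ x; for 1 ≤ i ≤ x, L[2+i, 2] = −p+1 and L[2+i, 2+i] = p; for 1 ≤ j ≤ y, L[2+x+j, 2] = −1 and L[2+x+j, 2+x+j] = p; and L[N, 2] = −1, L[N, N] = p. Then the cokernel of L is isomorphic to (Z_p)^{x+y+1} ⊕ Z_{p·a}. -/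
/-- The reduced asymmetric Laplacian of the digraph `D^{x+y+1}_{p;a}` (0-based indexing,
`N = x+y+3`): row `0` has `p, 1−p` in columns `0, 1`; row `1` has `−p` in column `0`,
`r = p(x+1)+a−x−1` in column `1` and `−p` in columns `2, …, x+1`; for `1 ≤ i ≤ x`, row
`1+i` has `1−p` in column `1` and `p` on the diagonal; for `1 ≤ j ≤ y`, row `1+x+j` has
`−1` in column `1` and `p` on the diagonal; row `N−1` has `−1` in column `1` and `p` in
column `N−1`. -/
def laplacianDpa (p a x y : ℕ) : Matrix (Fin (x + y + 3)) (Fin (x + y + 3)) ℤ :=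
  Matrix.of fun i j =>
    if (i : ℕ) = 0 then
      if (j : ℕ) = 0 then (p : ℤ)
      else if (j : ℕ) = 1 then 1 - (p : ℤ)
      else 0
    else if (i : ℕ) = 1 then
      if (j : ℕ) = 0 then -(p : ℤ)
      else if (j : ℕ) = 1 then (p : ℤ) * ((x : ℤ) + 1) + (a : ℤ) - (x : ℤ) - 1
      else if 2 ≤ (j : ℕ) ∧ (j : ℕ) ≤ x + 1 then -(p : ℤ)
      else 0
    else if (i : ℕ) ≤ x + 1 then
      if (j : ℕ) = 1 then 1 - (p : ℤ)
      else if (j : ℕ) = (i : ℕ) then (p : ℤ)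
      else 0
    else if (i : ℕ) ≤ x + y + 1 then
      if (j : ℕ) = 1 then -1
      else if (j : ℕ) = (i : ℕ) then (p : ℤ)
      else 0
    else
      if (j : ℕ) = 1 then -1
      else if (j : ℕ) = x + y + 2 then (p : ℤ)
      else 0

/-!
Write `e_i` for the standard basis of `ℤ^N` and index the hub by `1`. Every row other than that of
the hub has the form `p e_i - c_i e_1`, and adding the rows `0, 2, …, x + 1` to row `1` leaves
`a e_1`. The last weight `c_i` is `1`, so in the cokernel `e_1 = p e_{N-1}`. The other relations
then become `p (e_i - c_i e_{N-1}) = 0` and `p a e_{N-1} = 0`, that is, a diagonal presentation in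
the generators `e_{N-1}` and `e_i - c_i e_{N-1}`, `i ≠ 1, N - 1`.
-/

section Closure

variable {G ι : Type*} [AddCommGroup G]

theorem closure_range_eq_closure_insert {r r' : ι → G} {g : G} {o : ι} (hr : r o = 0)
    (hne : ∀ i ≠ o, r' i = r i) (ho : g - r' o ∈ AddSubgroup.closure (Set.range r)) :
    AddSubgroup.closure (Set.range r') = AddSubgroup.closure (insert g (Set.range r)) := by
  apply le_antisymm
  · have hle : AddSubgroup.closure (Set.range r) ≤ AddSubgroup.closure (insert g (Set.range r)) :=
      AddSubgroup.closure_mono (Set.subset_insert _ _)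
    rw [AddSubgroup.closure_le]
    rintro _ ⟨i, rfl⟩
    obtain rfl | hi := eq_or_ne i o
    · rw [← sub_sub_cancel g (r' i)]
      exact sub_mem (AddSubgroup.subset_closure (.inl rfl)) (hle ho)
    · rw [hne i hi]
      exact hle (AddSubgroup.subset_closure ⟨i, rfl⟩)
  · have hle : AddSubgroup.closure (Set.range r) ≤ AddSubgroup.closure (Set.range r') := by
      rw [AddSubgroup.closure_le]
      rintro _ ⟨i, rfl⟩
      obtain rfl | hi := eq_or_ne i o
      · rw [hr]
        exact zero_mem _
      · rw [← hne i hi]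
        exact AddSubgroup.subset_closure ⟨i, rfl⟩
    rw [AddSubgroup.closure_le, Set.insert_subset_iff]
    refine ⟨?_, (AddSubgroup.closure_le _).mp hle⟩
    rw [← sub_add_cancel g (r' o)]
    exact add_mem (hle ho) (AddSubgroup.subset_closure ⟨o, rfl⟩)

end Closure

section Spoke

variable {ι : Type*} [DecidableEq ι]

/-- The relation `p e_i = c_i e_o` joining the generator `e_i` to the hub `e_o`, as an element of
`ℤ^ι`. -/
def spoke (p : ℕ) (c : ι → ℤ) (o i : ι) : ι → ℤ :=
  Pi.single i (p : ℤ) - Pi.single o (c i)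

/-- The lattice of relations `p e_i = c_i e_o` for all `i`, together with `a e_o = 0`. The weight
of the hub is meant to be `c o = p`, which makes the relation at `i = o` trivial. -/
def spokeLattice (p a : ℕ) (c : ι → ℤ) (o : ι) : AddSubgroup (ι → ℤ) :=
  AddSubgroup.closure (insert (Pi.single o (a : ℤ)) (Set.range (spoke p c o)))

variable {p a : ℕ} {c : ι → ℤ} {o ℓ : ι}

theorem spoke_hub (hco : c o = p) : spoke p c o o = 0 := by
  rw [spoke, hco, sub_self]

theorem spoke_mem_spokeLattice (i : ι) : spoke p c o i ∈ spokeLattice p a c o :=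
  AddSubgroup.subset_closure (.inr ⟨i, rfl⟩)

theorem single_hub_mem_spokeLattice : Pi.single o (a : ℤ) ∈ spokeLattice p a c o :=
  AddSubgroup.subset_closure (.inl rfl)

theorem single_add_single_mem_spokeLattice (hcℓ : c ℓ = 1) {b d : ℤ}
    (h : ((p * a : ℕ) : ℤ) ∣ p * b + d) :
    Pi.single o b + Pi.single ℓ d ∈ spokeLattice p a c o := by
  obtain ⟨t, ht⟩ := h
  have hd : d = (a * t - b) * p := by
    push_cast at ht
    linear_combination ht
  have key : Pi.single o b + Pi.single ℓ d
      = (a * t - b) • spoke p c o ℓ + t • Pi.single o (a : ℤ) := by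
    simp only [spoke, hcℓ, hd, smul_sub, ← Pi.single_smul', smul_eq_mul]
    rw [sub_add_eq_add_sub, add_sub_assoc, ← Pi.single_sub, add_comm]
    congr 2
    ring
  rw [key]
  exact add_mem (zsmul_mem (spoke_mem_spokeLattice ℓ) _) (zsmul_mem single_hub_mem_spokeLattice _)

variable [Fintype ι]

theorem dotProduct_spoke (hco : c o = p) (i : ι) : c ⬝ᵥ spoke p c o i = 0 := by
  rw [spoke, dotProduct_sub, dotProduct_single, dotProduct_single, hco, mul_comm, sub_self]

theorem mem_spokeLattice_of_dvd (hco : c o = p) (hcℓ : c ℓ = 1) (hoℓ : o ≠ ℓ) {v : ι → ℤ}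
    (hv : ∀ i ∈ ({o, ℓ} : Finset ι)ᶜ, (p : ℤ) ∣ v i) (hcv : ((p * a : ℕ) : ℤ) ∣ c ⬝ᵥ v) :
    v ∈ spokeLattice p a c o := by
  choose! w hw using hv
  -- Subtracting `s` from `v` clears every coordinate except `o` and `ℓ`.
  set s := ∑ i ∈ ({o, ℓ} : Finset ι)ᶜ, w i • spoke p c o i with hs
  have hs_mem : s ∈ spokeLattice p a c o :=
    sum_mem fun i _ ↦ zsmul_mem (spoke_mem_spokeLattice i) _
  have hs_dot : c ⬝ᵥ s = 0 := by
    simp only [hs, dotProduct_sum, dotProduct_smul, dotProduct_spoke hco, smul_zero,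
      Finset.sum_const_zero]
  have hs_apply (i : ι) (hio : i ≠ o) (hiℓ : i ≠ ℓ) : s i = v i := by
    have hi : i ∈ ({o, ℓ} : Finset ι)ᶜ := by simp [hio, hiℓ]
    simp [hs, spoke, Pi.single_apply, hio, hiℓ, hw i hi, mul_comm]
  have hsupp : v - s = Pi.single o ((v - s) o) + Pi.single ℓ ((v - s) ℓ) := by
    funext i
    by_cases hio : i = o
    · simp [hio, hoℓ]
    by_cases hiℓ : i = ℓ
    · simp [hiℓ, hoℓ.symm]
    simp [hio, hiℓ, hs_apply]
  have hdvd : ((p * a : ℕ) : ℤ) ∣ p * (v - s) o + (v - s) ℓ := by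
    have hdot : c ⬝ᵥ (v - s) = p * (v - s) o + (v - s) ℓ := by
      conv_lhs => rw [hsupp]
      rw [dotProduct_add, dotProduct_single, dotProduct_single, hco, hcℓ, one_mul]
    rwa [← hdot, dotProduct_sub, hs_dot, sub_zero]
  rw [← sub_add_cancel v s, hsupp]
  exact add_mem (single_add_single_mem_spokeLattice hcℓ hdvd) hs_mem

/-- The reduction map `v ↦ (v mod p, c · v mod p a)`, whose first component forgets the
coordinates `o` and `ℓ`; it presents the target as the quotient by `spokeLattice p a c o` when
`c o = p` and `c ℓ = 1`. -/
def spokeReduction (p a : ℕ) (c : ι → ℤ) (o ℓ : ι) :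
    (ι → ℤ) →+ ({i // i ∈ ({o, ℓ} : Finset ι)ᶜ} → ZMod p) × ZMod (p * a) :=
  AddMonoidHom.mk' (fun v ↦ (fun i ↦ (v i : ZMod p), ((c ⬝ᵥ v : ℤ) : ZMod (p * a))))
    fun u v ↦ by ext <;> simp [dotProduct_add]

theorem spokeReduction_eq_zero_iff {v : ι → ℤ} :
    spokeReduction p a c o ℓ v = 0 ↔
      (∀ i ∈ ({o, ℓ} : Finset ι)ᶜ, (p : ℤ) ∣ v i) ∧ ((p * a : ℕ) : ℤ) ∣ c ⬝ᵥ v := by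
  simp only [spokeReduction, AddMonoidHom.mk'_apply, Prod.mk_eq_zero, funext_iff, Pi.zero_apply,
    ZMod.intCast_zmod_eq_zero_iff_dvd, Subtype.forall]

theorem ker_spokeReduction (hco : c o = p) (hcℓ : c ℓ = 1) (hoℓ : o ≠ ℓ) :
    (spokeReduction p a c o ℓ).ker = spokeLattice p a c o := by
  apply le_antisymm
  · intro v hv
    obtain ⟨hv, hcv⟩ := spokeReduction_eq_zero_iff.mp hv
    exact mem_spokeLattice_of_dvd hco hcℓ hoℓ hv hcv
  · have hne (j : ι) (hj : j ∈ ({o, ℓ} : Finset ι)ᶜ) : j ≠ o := by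
      rintro rfl
      simp at hj
    rw [spokeLattice, AddSubgroup.closure_le]
    rintro _ (rfl | ⟨i, rfl⟩) <;> refine spokeReduction_eq_zero_iff.mpr ⟨fun j hj ↦ ?_, ?_⟩
    · simp [hne j hj]
    · simp [hco]
    · obtain rfl | hji := eq_or_ne j i <;> simp [spoke, hne j hj, *]
    · rw [dotProduct_spoke hco]
      exact dvd_zero _

theorem spokeReduction_surjective (hcℓ : c ℓ = 1) :
    Function.Surjective (spokeReduction p a c o ℓ) := by
  rintro ⟨f, z⟩
  choose g hg using fun i ↦ ZMod.intCast_surjective (f i)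
  obtain ⟨n, rfl⟩ := ZMod.intCast_surjective z
  set u : ι → ℤ := Function.extend Subtype.val g 0 with hu
  refine ⟨u + Pi.single ℓ (n - c ⬝ᵥ u), Prod.ext (funext fun i ↦ ?_) ?_⟩
  · have hiℓ : (i : ι) ≠ ℓ := fun h ↦ by simpa [h] using i.2
    simp [spokeReduction, hiℓ, hu, hg]
  · simp [spokeReduction, dotProduct_add, hcℓ]

/-- The group with generators `e_i` and relations `p e_i = c_i e_o`, `a e_o = 0` is
`(ℤ/p)^(|ι| - 2) ⊕ ℤ/(p a)` as soon as some generator `e_ℓ` has weight `1`. -/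
noncomputable def quotientSpokeLatticeEquiv (a : ℕ) (hco : c o = p) (hcℓ : c ℓ = 1) (hoℓ : o ≠ ℓ) :
    (ι → ℤ) ⧸ spokeLattice p a c o ≃+ ({i // i ∈ ({o, ℓ} : Finset ι)ᶜ} → ZMod p) × ZMod (p * a) :=
  (QuotientAddGroup.quotientAddEquivOfEq (ker_spokeReduction hco hcℓ hoℓ).symm).trans
    (QuotientAddGroup.quotientKerEquivOfSurjective _ (spokeReduction_surjective hcℓ))

end Spoke

section Laplacian

/-- The vertices whose row in `laplacianDpa` has hub entry `1 - p`: the indices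
`0, 2, …, x + 1`. -/
def heavyVertices (x y : ℕ) : Finset (Fin (x + y + 3)) :=
  {i | (i : ℕ) = 0 ∨ 2 ≤ (i : ℕ) ∧ (i : ℕ) ≤ x + 1}

/-- The weights `c_i` for which row `i ≠ 1` of `laplacianDpa` is `p e_i - c_i e_1`, with weight `p`
at the hub `1`. -/
def hubWeight (p x y : ℕ) (i : Fin (x + y + 3)) : ℤ :=
  if i = 1 then p else if i ∈ heavyVertices x y then p - 1 else 1

variable (p a x y : ℕ)

theorem card_heavyVertices : (heavyVertices x y).card = x + 1 := by
  have hmap : (heavyVertices x y).map Fin.valEmbedding = insert 0 (Finset.Icc 2 (x + 1)) := by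
    ext k
    simp only [heavyVertices, Finset.mem_map, Finset.mem_filter, Finset.mem_univ, true_and,
      Fin.valEmbedding_apply, Finset.mem_insert, Finset.mem_Icc]
    exact ⟨fun ⟨_, hi, hik⟩ ↦ hik ▸ hi, fun hk ↦ ⟨⟨k, by omega⟩, hk, rfl⟩⟩
  rw [← Finset.card_map Fin.valEmbedding, hmap, Finset.card_insert_of_notMem (by simp)]
  simp

theorem one_notMem_heavyVertices : 1 ∉ heavyVertices x y := by
  simp [heavyVertices]

theorem hubWeight_one : hubWeight p x y 1 = p :=
  if_pos rfl

theorem hubWeight_of_mem {i : Fin (x + y + 3)} (hi : i ∈ heavyVertices x y) :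
    hubWeight p x y i = p - 1 := by
  have hi1 : i ≠ 1 := fun h ↦ one_notMem_heavyVertices x y (h ▸ hi)
  rw [hubWeight, if_neg hi1, if_pos hi]

theorem one_ne_last : (1 : Fin (x + y + 3)) ≠ Fin.last (x + y + 2) := by
  simp [Fin.ext_iff]

theorem hubWeight_last : hubWeight p x y (Fin.last (x + y + 2)) = 1 := by
  have hlast : Fin.last (x + y + 2) ∉ heavyVertices x y := by
    simp only [heavyVertices, Finset.mem_filter, Finset.mem_univ, true_and, Fin.val_last]
    omega
  rw [hubWeight, if_neg (one_ne_last x y).symm, if_neg hlast]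

theorem laplacianDpa_eq_spoke {i : Fin (x + y + 3)} (hi : i ≠ 1) :
    laplacianDpa p a x y i = spoke p (hubWeight p x y) 1 i := by
  funext j
  have hi' : (i : ℕ) ≠ 1 := fun h ↦ hi (Fin.ext h)
  simp only [laplacianDpa, spoke, hubWeight, heavyVertices, Matrix.of_apply, Pi.sub_apply,
    Pi.single_apply, Finset.mem_filter, Finset.mem_univ, true_and, Fin.ext_iff, Fin.val_one]
  grind

theorem sum_heavyVertices_spoke (j : Fin (x + y + 3)) :
    (∑ i ∈ heavyVertices x y, spoke p (hubWeight p x y) 1 i) j =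
      (if j ∈ heavyVertices x y then (p : ℤ) else 0) -
        if j = 1 then ((x : ℤ) + 1) * (p - 1) else 0 := by
  have hweight : ∑ i ∈ heavyVertices x y, hubWeight p x y i = ((x : ℤ) + 1) * (p - 1) := by
    rw [Finset.sum_congr rfl fun _ hi ↦ hubWeight_of_mem p x y hi, Finset.sum_const,
      card_heavyVertices, nsmul_eq_mul, Nat.cast_succ]
  simp only [spoke, Finset.sum_apply, Pi.sub_apply, Pi.single_apply, Finset.sum_sub_distrib,
    Finset.sum_ite_eq, ← hweight]
  split_ifs <;> simp

theorem laplacianDpa_one :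
    laplacianDpa p a x y 1 =
      Pi.single 1 (a : ℤ) - ∑ i ∈ heavyVertices x y, spoke p (hubWeight p x y) 1 i := by
  funext j
  rw [Pi.sub_apply, sum_heavyVertices_spoke]
  simp only [laplacianDpa, heavyVertices, Matrix.of_apply, Pi.single_apply, Finset.mem_filter,
    Finset.mem_univ, true_and, Fin.ext_iff, Fin.val_one]
  grind

theorem closure_range_laplacianDpa :
    AddSubgroup.closure (Set.range fun i ↦ laplacianDpa p a x y i) =
      spokeLattice p a (hubWeight p x y) 1 := by
  refine closure_range_eq_closure_insert (spoke_hub (hubWeight_one p x y))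
    (fun _ ↦ laplacianDpa_eq_spoke p a x y) ?_
  rw [laplacianDpa_one, sub_sub_cancel]
  exact sum_mem fun i _ ↦ AddSubgroup.subset_closure ⟨i, rfl⟩

end Laplacian

/-- The cokernel of the reduced asymmetric Laplacian of `D^{x+y+1}_{p;a}` is isomorphic to
`(ℤ/p)^{x+y+1} ⊕ ℤ/(p·a)`. -/
theorem cokernel_laplacianDpa (p a x y : ℕ) (hp : 2 ≤ p) (ha : 2 ≤ a) :
    Nonempty ((laplacianDpa p a x y).cokernel ≃+
      ((Fin (x + y + 1) → ZMod p) × ZMod (p * a))) := by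
  have hcard : (({1, Fin.last (x + y + 2)} : Finset (Fin (x + y + 3)))ᶜ).card = x + y + 1 := by
    rw [Finset.card_compl, Finset.card_pair (one_ne_last x y), Fintype.card_fin]
    rfl
  have reindex :
      ({i // i ∈ ({1, Fin.last (x + y + 2)} : Finset (Fin (x + y + 3)))ᶜ} → ZMod p) ≃+
      (Fin (x + y + 1) → ZMod p) :=
    AddEquiv.arrowCongr (Finset.equivFinOfCardEq hcard) (AddEquiv.refl _)
  exact ⟨(QuotientAddGroup.quotientAddEquivOfEq (closure_range_laplacianDpa p a x y)).trans <|
    (quotientSpokeLatticeEquiv a (hubWeight_one p x y) (hubWeight_last p x y)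
      (one_ne_last x y)).trans (reindex.prodCongr (AddEquiv.refl _))⟩
end

section
/- Let m ≥ 1 be an integer and let L be the 3 × 3 integer matrix with every diagonal entry equal to 2m+1 and every off-diagonal entry equal to −m (i.e. L = (3m+1)·I_3 − m·J_3, where J_3 is the all-ones matrix). Then the cokernel of L is isomorphic to Z_{3m+1} ⊕ Z_{3m+1}. -/
/-!
Let `L = d • 1 - 𝟙 wᵀ` with `d = 1 + ∑ j, w j`. Every row of `L` sums to `1`, so `x = c L` forces
`∑ x = ∑ c` and hence `x + (∑ x) w = d c`. The row lattice is therefore cut out by the congruences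
`x j + (∑ x) * w j ≡ 0 [mod d]`. Their left-hand sides add up to `d * ∑ x`, so one congruence
follows from the others, whose residues are prescribed arbitrarily by vectors of sum zero. Thus the
cokernel is a power of `ℤ/d` with one factor fewer than the size of `L`.
-/

open Matrix

theorem mem_closure_rows_iff {m n : Type*} [Fintype m] (L : Matrix m n ℤ) (x : n → ℤ) :
    x ∈ AddSubgroup.closure (Set.range fun i => L i) ↔ ∃ c : m → ℤ, c ᵥ* L = x := by
  simp only [AddSubgroup.mem_closure_range_iff_of_fintype, vecMul_eq_sum, eq_comm]

section Laplacian
variable {R ι : Type*} [CommRing R] [Fintype ι] [DecidableEq ι]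

/-- The reduced Laplacian of the digraph in which every non-sink vertex has one edge to the sink
and `w j` edges to each non-sink vertex `j`. Loops cancel, so the `i`-th diagonal entry is
`1 + ∑ j ≠ i, w j`. The weights may lie in any commutative ring. -/
def headWeightLaplacian (w : ι → R) : Matrix ι ι R :=
  (1 + ∑ j, w j : R) • (1 : Matrix ι ι R) - replicateRow ι w

theorem headWeightLaplacian_const (n : ℕ) (a : R) :
    headWeightLaplacian (fun _ : Fin (n + 1) => a) =
      Matrix.of fun i j => if i = j then n * a + 1 else -a := by
  ext i j
  simp only [headWeightLaplacian, Matrix.sub_apply, Matrix.smul_apply, replicateRow_apply,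
    one_apply, of_apply, Fin.sum_const, nsmul_eq_mul, Nat.cast_succ, smul_eq_mul]
  split_ifs <;> ring

theorem vecMul_headWeightLaplacian (w c : ι → R) :
    c ᵥ* headWeightLaplacian w = (1 + ∑ j, w j) • c - (∑ i, c i) • w := by
  have hw : c ᵥ* replicateRow ι w = (∑ i, c i) • w := by
    ext j
    simp [vecMul, dotProduct, Finset.sum_mul]
  rw [headWeightLaplacian, vecMul_sub, vecMul_smul, vecMul_one, hw]

theorem sum_vecMul_headWeightLaplacian (w c : ι → R) :
    ∑ j, (c ᵥ* headWeightLaplacian w) j = ∑ i, c i := by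
  simp only [vecMul_headWeightLaplacian, Pi.sub_apply, Pi.smul_apply, smul_eq_mul,
    Finset.sum_sub_distrib, ← Finset.mul_sum]
  ring

theorem exists_vecMul_headWeightLaplacian_eq_iff {n : ℕ} (w x : Fin (n + 1) → R) :
    (∃ c, c ᵥ* headWeightLaplacian w = x) ↔
      ∀ i : Fin n, 1 + ∑ j, w j ∣ x i.succ + (∑ j, x j) * w i.succ := by
  constructor
  · rintro ⟨c, rfl⟩ i
    refine ⟨c i.succ, ?_⟩
    rw [sum_vecMul_headWeightLaplacian, vecMul_headWeightLaplacian]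
    simp
  · intro h
    choose k hk using h
    -- Choosing `c 0` to make `∑ c = ∑ x` avoids a division by `1 + ∑ w`, which may be zero.
    let c : Fin (n + 1) → R := Fin.cons (∑ j, x j - ∑ i, k i) k
    have hc_sum : ∑ i, c i = ∑ j, x j := by simp [c, Fin.sum_univ_succ]
    have hk_sum : ∑ i : Fin n, x i.succ + (∑ j, x j) * ∑ i : Fin n, w i.succ =
        (1 + ∑ j, w j) * ∑ i, k i := by
      simp only [Finset.mul_sum, ← hk, Finset.sum_add_distrib]
    refine ⟨c, ?_⟩
    rw [vecMul_headWeightLaplacian, hc_sum]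
    ext j
    cases j using Fin.cases with
    | zero =>
      simp only [c, Pi.sub_apply, Pi.smul_apply, smul_eq_mul, Fin.cons_zero]
      rw [mul_sub, ← hk_sum, Fin.sum_univ_succ w, Fin.sum_univ_succ x]
      ring
    | succ i => simp [c, ← hk i]

end Laplacian

section Cokernel
variable {n : ℕ} (w : Fin (n + 1) → ℤ)

/-- The residues modulo `1 + ∑ j, w j` whose vanishing characterizes the row lattice of
`headWeightLaplacian w`. The redundant residue at index `0` is left out; the absolute value in
the modulus allows for negative weights. -/
def tailResidue : (Fin (n + 1) → ℤ) →+ (Fin n → ZMod (1 + ∑ j, w j).natAbs) :=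
  AddMonoidHom.mk' (fun x i => ((x i.succ + (∑ j, x j) * w i.succ : ℤ) : ZMod _)) fun x y => by
    ext i
    simp only [Pi.add_apply, Finset.sum_add_distrib, ← Int.cast_add]
    congr 1
    ring

theorem tailResidue_surjective : Function.Surjective (tailResidue w) := by
  intro y
  choose z hz using fun i => ZMod.intCast_surjective (y i)
  refine ⟨Fin.cons (-∑ i, z i) z, ?_⟩
  ext i
  simp [tailResidue, Fin.sum_univ_succ, hz]

theorem mem_ker_tailResidue_iff (x : Fin (n + 1) → ℤ) :
    x ∈ (tailResidue w).ker ↔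
      ∀ i : Fin n, 1 + ∑ j, w j ∣ x i.succ + (∑ j, x j) * w i.succ := by
  simp [AddMonoidHom.mem_ker, funext_iff, tailResidue, -Int.cast_add, -Int.cast_mul,
    ZMod.intCast_zmod_eq_zero_iff_dvd]

theorem closure_rows_headWeightLaplacian_eq_ker :
    AddSubgroup.closure (Set.range fun i => headWeightLaplacian w i) = (tailResidue w).ker := by
  ext x
  rw [mem_closure_rows_iff, exists_vecMul_headWeightLaplacian_eq_iff, mem_ker_tailResidue_iff]

theorem cokernel_three_by_three_general :
    Nonempty ((headWeightLaplacian w).cokernel ≃+ (Fin n → ZMod (1 + ∑ j, w j).natAbs)) :=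
  ⟨QuotientAddGroup.liftEquiv _ (tailResidue_surjective w)
    (closure_rows_headWeightLaplacian_eq_ker w)⟩

end Cokernel

/-- For `m ≥ 1`, the cokernel of the `3 × 3` matrix with diagonal entries `2m+1` and
off-diagonal entries `−m` (i.e. `(3m+1)·I₃ − m·J₃`) is isomorphic to
`ℤ/(3m+1) ⊕ ℤ/(3m+1)`. -/
theorem cokernel_three_by_three (m : ℕ) (hm : 1 ≤ m) :
    Nonempty
      ((Matrix.of fun i j : Fin 3 =>
          if i = j then 2 * (m : ℤ) + 1 else -(m : ℤ)).cokernel ≃+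
        (ZMod (3 * m + 1) × ZMod (3 * m + 1))) := by
  have hd : (1 + ∑ _ : Fin 3, (m : ℤ)).natAbs = 3 * m + 1 := by rw [Fin.sum_univ_three]; omega
  rw [← hd, ← Nat.cast_two, ← headWeightLaplacian_const]
  exact (cokernel_three_by_three_general _).map
    (·.trans (RingEquiv.piFinTwo fun _ => ZMod _).toAddEquiv)
end
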